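/- arXiv:1903.01174 — 3 statements merged into one kernel-verified Lean document; each statement's English description precedes it below -/
import Mathlib

section
/- Let U ⊆ ℂ be an open set and let F : U → ℝ be a C^∞-smooth function. Suppose there exist functions A, B, C, D holomorphic on U such that F_{zz} = A·(F_z)³ + B·(F_z)² + C·F_z + D holds at every point of U (where F is viewed as a ℂ-valued function via ℝ ⊆ ℂ). Then F is real-analytic on U. -/
open Complex

/-- The Wirtinger derivative `g_z = (1/2)(∂g/∂x - i ∂g/∂y)` of a function `g : ℂ → ℂ`,
computed from the real Fréchet derivative. -/
noncomputable def wirtingerZ (g : ℂ → ℂ) : ℂ → ℂ :=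
  fun z => (1 / 2 : ℂ) * (fderiv ℝ g z 1 - Complex.I * fderiv ℝ g z Complex.I)

/-- The conjugate Wirtinger derivative `g_z̄ = (1/2)(∂g/∂x + i ∂g/∂y)`. -/
noncomputable def wirtingerZbar (g : ℂ → ℂ) : ℂ → ℂ :=
  fun z => (1 / 2 : ℂ) * (fderiv ℝ g z 1 + Complex.I * fderiv ℝ g z Complex.I)

/-!
Write the equation as `F_zz = G(z, F_z)` with `G` holomorphic, and put `p = F_z`, `r = F_zz̄`.
Differentiating it in `z̄` gives `r_z = G_p(z, p) r`. Since `F` is real-valued, so is `r`, hence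
`r_z̄` is the conjugate of `r_z`. Thus `(p, r)` solves the total differential system
`dp = G dz + r dz̄`, `dr = G_p r dz + conj(G_p) r dz̄`, whose right-hand side is real-analytic in
`(z, p, r)`, and `F` is recovered from `dF = p dz + conj(p) dz̄`.

A solution `u` of a system `du = Φ(z, u)` with `Φ` analytic is analytic: `w(t) = u(z₀ + t h)` is a
fixed point of the Picard operator of `w' = Φ(z₀ + t h, w) h`, which is analytic in `(h, w)` on a
space of continuous curves and constant in `w` for `h = 0`. By the analytic implicit function
theorem the fixed point depends analytically on `h`, and so does `u(z₀ + h) = w(1)`.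
-/

open scoped ComplexConjugate ContDiff Topology
open Set Filter

section Superposition

variable {K Y Z : Type*} [TopologicalSpace K]

/-- The superposition (Nemytskii) operator `v ↦ g ∘ v` on spaces of continuous functions. When
`g ∘ v` is not continuous, its value is the junk value `0`. -/
noncomputable def superposition [TopologicalSpace Y] [TopologicalSpace Z] [Zero Z]
    (g : Y → Z) (v : C(K, Y)) : C(K, Z) :=
  ContinuousMap.mkD (g ∘ v) 0

section Topological

variable [CompactSpace K] [TopologicalSpace Y] [TopologicalSpace Z] [Zero Z] {g : Y → Z} {y₀ : Y}

lemma eventually_forall_apply_of_eventually {p : Y → Prop} (hp : ∀ᶠ y in 𝓝 y₀, p y) :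
    ∀ᶠ v in 𝓝 (ContinuousMap.const K y₀), ∀ t, p (v t) := by
  obtain ⟨s, hs, hs_open, hys⟩ := eventually_nhds_iff.1 hp
  filter_upwards [ContinuousMap.eventually_mapsTo isCompact_univ hs_open
    (fun _ _ ↦ hys : MapsTo (ContinuousMap.const K y₀) univ s)] with v hv t
  exact hs _ (hv (mem_univ t))

lemma eventually_superposition_apply (hg : ∀ᶠ y in 𝓝 y₀, ContinuousAt g y) :
    ∀ᶠ v in 𝓝 (ContinuousMap.const K y₀), ∀ t, superposition g v t = g (v t) := by
  filter_upwards [eventually_forall_apply_of_eventually hg] with v hv t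
  exact ContinuousMap.mkD_apply_of_continuous
    (continuous_iff_continuousAt.2 fun s ↦ (hv s).comp v.continuous.continuousAt)

lemma tendsto_superposition_const (hg : ∀ᶠ y in 𝓝 y₀, ContinuousAt g y) :
    Tendsto (superposition g) (𝓝 (ContinuousMap.const K y₀))
      (𝓝 (ContinuousMap.const K (g y₀))) := by
  refine ContinuousMap.tendsto_nhds_compactOpen.2 fun s _ O hO hmaps ↦ ?_
  rcases s.eq_empty_or_nonempty with rfl | ⟨t₀, ht₀⟩
  · exact .of_forall fun _ ↦ mapsTo_empty _ _
  filter_upwards [eventually_superposition_apply hg, eventually_forall_apply_of_eventually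
    (hg.self_of_nhds.eventually (hO.mem_nhds (hmaps ht₀)))] with v hv hvO t _
  rw [hv]
  exact hvO t

end Topological

section Analytic

variable [CompactSpace K] {𝕜 : Type*} [NontriviallyNormedField 𝕜]
  [NormedAddCommGroup Y] [NormedSpace 𝕜 Y] [NormedAddCommGroup Z] [NormedSpace 𝕜 Z]

/-- The continuous multilinear map `(v₁, …, vₙ) ↦ (t ↦ m (v₁ t, …, vₙ t))` on spaces of continuous
functions induced by a continuous multilinear map `m`: the terms of the power series of a
superposition operator have this form. -/
noncomputable def multilinearSuperposition {n : ℕ} (m : Y [×n]→L[𝕜] Z) :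
    C(K, Y) [×n]→L[𝕜] C(K, Z) :=
  MultilinearMap.mkContinuous
    { toFun v := ⟨fun t ↦ m fun i ↦ v i t, by fun_prop⟩
      map_update_add' v i x y := by
        ext t
        simp [Function.apply_update (fun _ (w : C(K, Y)) ↦ w t)]
      map_update_smul' v i c x := by
        ext t
        simp [Function.apply_update (fun _ (w : C(K, Y)) ↦ w t)] }
    ‖m‖ fun v ↦ (ContinuousMap.norm_le _ (by positivity)).2 fun t ↦
      (m.le_opNorm _).trans (by gcongr; exact (v _).norm_coe_le_norm t)

lemma norm_multilinearSuperposition_le {n : ℕ} (m : Y [×n]→L[𝕜] Z) :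
    ‖(multilinearSuperposition m : C(K, Y) [×n]→L[𝕜] C(K, Z))‖ ≤ ‖m‖ :=
  MultilinearMap.mkContinuous_norm_le _ (norm_nonneg m) _

theorem analyticAt_superposition_const [CompleteSpace Z] {g : Y → Z} {y₀ : Y}
    (hg : AnalyticAt 𝕜 g y₀) :
    AnalyticAt 𝕜 (superposition g) (ContinuousMap.const K y₀) := by
  have hg_cont : ∀ᶠ y in 𝓝 y₀, ContinuousAt g y :=
    hg.eventually_continuousAt
  obtain ⟨q, r, hq⟩ := hg
  let P : FormalMultilinearSeries 𝕜 C(K, Y) C(K, Z) := fun n ↦ multilinearSuperposition (q n)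
  have hrP : r ≤ P.radius := hq.r_le.trans <|
    FormalMultilinearSeries.radius_le_of_le fun n ↦ norm_multilinearSuperposition_le (q n)
  have hP := P.hasFPowerSeriesOnBall (hq.r_pos.trans_le hrP)
  have hP_analytic : AnalyticAt 𝕜 (fun v ↦ P.sum (v - ContinuousMap.const K y₀))
      (ContinuousMap.const K y₀) := by
    simpa using (hP.comp_sub (ContinuousMap.const K y₀)).analyticAt
  refine hP_analytic.congr ?_
  filter_upwards [Metric.eball_mem_nhds _ hq.r_pos, eventually_superposition_apply hg_cont,
    eventually_forall_apply_of_eventually (Metric.eball_mem_nhds y₀ hq.r_pos)] with v hv hgv hvt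
  ext t
  rw [hgv]
  have hv_mem : v - ContinuousMap.const K y₀ ∈ Metric.eball 0 P.radius := by
    simpa [edist_eq_enorm_sub] using hv.trans_le hrP
  rw [← zero_add (v - ContinuousMap.const K y₀)]
  exact ((hP.hasSum hv_mem).mapL (ContinuousMap.evalCLM 𝕜 t)).unique (hq.hasSum_sub (hvt t))

end Analytic

end Superposition

section Volterra

open scoped unitInterval

variable {X : Type*} [NormedAddCommGroup X] [NormedSpace ℝ X]

/-- The Volterra operator `f ↦ (t ↦ ∫₀ᵗ f)` on continuous curves `[0, 1] → X`. -/
noncomputable def volterra : C(I, X) →L[ℝ] C(I, X) where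
  toFun f := ⟨fun t ↦ ∫ s in (0 : ℝ)..t, f (projIcc 0 1 zero_le_one s), by fun_prop⟩
  map_add' f g := by
    ext t
    exact intervalIntegral.integral_add (Continuous.intervalIntegrable (by fun_prop) _ _)
      (Continuous.intervalIntegrable (by fun_prop) _ _)
  map_smul' c f := by
    ext t
    exact intervalIntegral.integral_smul c _
  cont := ContinuousMap.continuous_of_continuous_uncurry _ (by
    simp only [Function.uncurry_def, ContinuousMap.coe_mk]
    fun_prop)

lemma volterra_apply_of_hasDerivAt [CompleteSpace X] {γ : ℝ → X} {f : C(I, X)}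
    (h : ∀ t : I, HasDerivAt γ (f t) t) (t : I) : volterra f t = γ t - γ 0 := by
  refine intervalIntegral.integral_eq_sub_of_hasDerivAt (fun s hs ↦ ?_)
    (Continuous.intervalIntegrable (by fun_prop) _ _)
  rw [uIcc_of_le t.2.1] at hs
  have hs' : s ∈ Icc (0 : ℝ) 1 := ⟨hs.1, hs.2.trans t.2.2⟩
  rw [projIcc_of_mem zero_le_one hs']
  exact h ⟨s, hs'⟩

end Volterra

section FixedPoint

variable {𝕜 E X : Type*} [RCLike 𝕜] [NormedAddCommGroup E] [NormedSpace 𝕜 E] [CompleteSpace E]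
  [NormedAddCommGroup X] [NormedSpace 𝕜 X] [CompleteSpace X]

theorem exists_analyticAt_eq_of_isFixedPt {T : E × X → X} {e₀ : E} {x₀ : X} {T' : X →L[𝕜] X}
    (hT : AnalyticAt 𝕜 T (e₀, x₀)) (hTx₀ : T (e₀, x₀) = x₀)
    (hT' : HasFDerivAt (fun x ↦ T (e₀, x)) T' x₀) (hunit : IsUnit (1 - T')) :
    ∃ ψ : E → X, AnalyticAt 𝕜 ψ e₀ ∧ ∀ᶠ v in 𝓝 (e₀, x₀), T v = v.2 → ψ v.1 = v.2 := by
  have hG : ContDiffAt 𝕜 ω (fun v ↦ v.2 - T v) (e₀, x₀) := (analyticAt_snd.sub hT).contDiffAt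
  have hpartial : fderiv 𝕜 (fun v : E × X ↦ v.2 - T v) (e₀, x₀) ∘L .inr 𝕜 E X = 1 - T' :=
    ((hG.differentiableAt (by simp)).hasFDerivAt.comp x₀
      (hasFDerivAt_prodMk_right e₀ x₀)).unique ((hasFDerivAt_id x₀).sub hT')
  have hinv : (fderiv 𝕜 (fun v : E × X ↦ v.2 - T v) (e₀, x₀) ∘L .inr 𝕜 E X).IsInvertible := by
    obtain ⟨e, he⟩ := hunit
    exact ⟨ContinuousLinearEquiv.ofUnit e, by rw [hpartial, ← he]; rfl⟩
  have hω : (ω : ℕ∞ω) ≠ 0 := by simp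
  refine ⟨hG.implicitFunction hω hinv, (hG.contDiffAt_implicitFunction hω hinv).analyticAt, ?_⟩
  filter_upwards [hG.eventually_apply_eq_iff_implicitFunction hω hinv] with v hv hfix
  exact hv.1 (by simp only [hfix, hTx₀, sub_self])

end FixedPoint

section TotalDifferential

open scoped unitInterval

variable {E X : Type*} [NormedAddCommGroup E] [NormedSpace ℝ E]

/-- The segment `t ↦ z₀ + t • h` from `z₀` to `z₀ + h`, as a curve depending continuously on `h`. -/
def segmentCurve (z₀ : E) : C(E, C(I, E)) :=
  ContinuousMap.curry ⟨fun v : E × I ↦ z₀ + (v.2 : ℝ) • v.1, by fun_prop⟩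

lemma segmentCurve_apply (z₀ h : E) (t : I) : segmentCurve z₀ h t = z₀ + (t : ℝ) • h :=
  rfl

lemma tendsto_segmentCurve_zero (z₀ : E) :
    Tendsto (segmentCurve z₀) (𝓝 0) (𝓝 (ContinuousMap.const I z₀)) := by
  have hzero : segmentCurve z₀ 0 = ContinuousMap.const I z₀ := by
    ext t
    simp [segmentCurve_apply]
  exact hzero ▸ (segmentCurve z₀).continuous.tendsto 0

lemma tendsto_superposition_segmentCurve [TopologicalSpace X] [Zero X] {u : E → X} {z₀ : E}
    (hu : ∀ᶠ z in 𝓝 z₀, ContinuousAt u z) :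
    Tendsto (fun h ↦ superposition u (segmentCurve z₀ h)) (𝓝 0)
      (𝓝 (ContinuousMap.const I (u z₀))) :=
  (tendsto_superposition_const hu).comp (tendsto_segmentCurve_zero z₀)

variable [NormedAddCommGroup X] [NormedSpace ℝ X]

/-- The curve `t ↦ (h, t • h, w t)` of arguments of the right-hand side of the equation
`w' = Φ (z₀ + t • h, w) h`. -/
def segmentData : E × C(I, X) →L[ℝ] C(I, E × E × X) where
  toFun v := ⟨fun t ↦ (v.1, (t : ℝ) • v.1, v.2 t), by fun_prop⟩
  map_add' v w := by ext t <;> simp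
  map_smul' c v := by ext t <;> simp [smul_comm c]
  cont := ContinuousMap.continuous_of_continuous_uncurry _ (by
    simp only [Function.uncurry_def, ContinuousMap.coe_mk]
    fun_prop)

lemma segmentData_apply (h : E) (w : C(I, X)) (t : I) :
    segmentData (h, w) t = (h, (t : ℝ) • h, w t) :=
  rfl

lemma segmentData_zero_const (x₀ : X) :
    segmentData ((0 : E), ContinuousMap.const I x₀) = ContinuousMap.const I (0, 0, x₀) := by
  ext t <;> simp [segmentData_apply]

/-- The right-hand side `Φ (z₀ + e, x) h` of the equation satisfied by a solution of `du = Φ (z, u)`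
along the segment from `z₀` to `z₀ + h`, as a function of `(h, e, x)`. -/
def segmentField (Φ : E × X → E →L[ℝ] X) (z₀ : E) (q : E × E × X) : X :=
  Φ (z₀ + q.2.1, q.2.2) q.1

/-- The Picard operator of the initial value problem `w' = Φ (z₀ + t • h, w) h`, `w 0 = x₀`,
as a function of the pair `(h, w)`. -/
noncomputable def segmentPicard (Φ : E × X → E →L[ℝ] X) (z₀ : E) (x₀ : X)
    (v : E × C(I, X)) : C(I, X) :=
  ContinuousMap.const I x₀ + volterra (superposition (segmentField Φ z₀) (segmentData v))

variable {Φ : E × X → E →L[ℝ] X} {z₀ : E} {x₀ : X}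

lemma analyticAt_segmentField (hΦ : AnalyticAt ℝ Φ (z₀, x₀)) :
    AnalyticAt ℝ (segmentField Φ z₀) (0, 0, x₀) := by
  have hpoint : AnalyticAt ℝ (fun q : E × E × X ↦ (z₀ + q.2.1, q.2.2)) (0, 0, x₀) :=
    ContDiffAt.analyticAt (by fun_prop)
  have hΦ_point : AnalyticAt ℝ (fun q : E × E × X ↦ Φ (z₀ + q.2.1, q.2.2)) (0, 0, x₀) :=
    hΦ.comp_of_eq hpoint (by simp)
  exact ((ContinuousLinearMap.id ℝ (E →L[ℝ] X)).analyticAt_bilinear _).comp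
    (hΦ_point.prod analyticAt_fst)

lemma analyticAt_segmentPicard [CompleteSpace X] (hΦ : AnalyticAt ℝ Φ (z₀, x₀)) :
    AnalyticAt ℝ (segmentPicard Φ z₀ x₀) (0, ContinuousMap.const I x₀) := by
  have hsup : AnalyticAt ℝ (superposition (segmentField Φ z₀))
      (segmentData ((0 : E), ContinuousMap.const I x₀)) := by
    rw [segmentData_zero_const]
    exact analyticAt_superposition_const (analyticAt_segmentField hΦ)
  exact analyticAt_const.add (((volterra (X := X)).analyticAt _).comp
    (hsup.comp ((segmentData (E := E) (X := X)).analyticAt _)))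

lemma segmentPicard_zero (w : C(I, X)) :
    segmentPicard Φ z₀ x₀ (0, w) = ContinuousMap.const I x₀ := by
  have hfield : segmentField Φ z₀ ∘ segmentData (0, w) = (0 : C(I, X)) := by
    ext t
    simp [segmentField, segmentData_apply]
  rw [segmentPicard, superposition, hfield, ContinuousMap.mkD_eq_self, map_zero, add_zero]

lemma hasDerivAt_comp_segment {u : E → X} {h : E} {t : ℝ} {u' : E →L[ℝ] X}
    (hu : HasFDerivAt u u' (z₀ + t • h)) :
    HasDerivAt (fun s : ℝ ↦ u (z₀ + s • h)) (u' h) t :=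
  hu.comp_hasDerivAt t (by simpa using ((hasDerivAt_id t).smul_const h).const_add z₀)

lemma eventually_segmentPicard_eq [CompleteSpace X] {u : E → X}
    (hΦ : AnalyticAt ℝ Φ (z₀, u z₀)) (hu : ∀ᶠ z in 𝓝 z₀, HasFDerivAt u (Φ (z, u z)) z) :
    ∀ᶠ h in 𝓝 0, segmentPicard Φ z₀ (u z₀) (h, superposition u (segmentCurve z₀ h)) =
      superposition u (segmentCurve z₀ h) := by
  have hu_cont : ∀ᶠ z in 𝓝 z₀, ContinuousAt u z := hu.mono fun _ hz ↦ hz.continuousAt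
  have hsegment := tendsto_segmentCurve_zero z₀
  have hdata : Tendsto (fun h ↦ segmentData (h, superposition u (segmentCurve z₀ h))) (𝓝 0)
      (𝓝 (ContinuousMap.const I (0, 0, u z₀))) := by
    rw [← segmentData_zero_const]
    exact (segmentData.continuous.tendsto _).comp
      (tendsto_id.prodMk_nhds (tendsto_superposition_segmentCurve hu_cont))
  filter_upwards [hsegment.eventually (eventually_superposition_apply hu_cont),
    hsegment.eventually (eventually_forall_apply_of_eventually hu),
    hdata.eventually (eventually_superposition_apply
      (analyticAt_segmentField hΦ).eventually_continuousAt)] with h hu_apply hu_deriv hfield_apply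
  ext t
  have hderiv (s : I) : HasDerivAt (fun s : ℝ ↦ u (z₀ + s • h))
      (superposition (segmentField Φ z₀)
        (segmentData (h, superposition u (segmentCurve z₀ h))) s) s := by
    rw [hfield_apply, segmentData_apply, hu_apply]
    exact hasDerivAt_comp_segment (hu_deriv s)
  simp [segmentPicard, volterra_apply_of_hasDerivAt hderiv, hu_apply, segmentCurve_apply]

theorem analyticAt_of_eventually_hasFDerivAt [CompleteSpace E] [CompleteSpace X] {u : E → X}
    (hΦ : AnalyticAt ℝ Φ (z₀, u z₀)) (hu : ∀ᶠ z in 𝓝 z₀, HasFDerivAt u (Φ (z, u z)) z) :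
    AnalyticAt ℝ u z₀ := by
  have hpartial : HasFDerivAt (fun w ↦ segmentPicard Φ z₀ (u z₀) (0, w)) (0 : C(I, X) →L[ℝ] C(I, X))
      (ContinuousMap.const I (u z₀)) := by
    simpa only [segmentPicard_zero] using hasFDerivAt_const _ _
  obtain ⟨ψ, hψ, hψ_fixed⟩ := exists_analyticAt_eq_of_isFixedPt (analyticAt_segmentPicard hΦ)
    (segmentPicard_zero _) hpartial (by simp)
  have hu_cont : ∀ᶠ z in 𝓝 z₀, ContinuousAt u z := hu.mono fun _ hz ↦ hz.continuousAt
  have hψ_eval : ∀ᶠ h in 𝓝 0, ψ h 1 = u (z₀ + h) := by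
    filter_upwards [(tendsto_id.prodMk_nhds (tendsto_superposition_segmentCurve hu_cont)).eventually
        hψ_fixed, eventually_segmentPicard_eq hΦ hu,
      (tendsto_segmentCurve_zero z₀).eventually (eventually_superposition_apply hu_cont)]
      with h hψh hfixed hu_apply
    rw [id_eq] at hψh
    rw [hψh hfixed, hu_apply]
    simp [segmentCurve_apply]
  have hu_translate : AnalyticAt ℝ (fun h ↦ u (z₀ + h)) 0 :=
    (((ContinuousMap.evalCLM ℝ (1 : I) : C(I, X) →L[ℝ] X).analyticAt _).comp hψ).congr hψ_eval
  have hsub : AnalyticAt ℝ (fun z ↦ z - z₀) z₀ := analyticAt_id.sub analyticAt_const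
  simpa [Function.comp_def] using hu_translate.comp_of_eq hsub (sub_self z₀)

end TotalDifferential

section Wirtinger

/-- The real-linear form `a dz + b dz̄` on `ℂ`. -/
noncomputable def wirtingerForm (a b : ℂ) : ℂ →L[ℝ] ℂ :=
  a • ContinuousLinearMap.id ℝ ℂ + b • (conjCLE : ℂ →L[ℝ] ℂ)

/-- The coefficient of `dz` in a real-linear form on `ℂ`. -/
noncomputable def dzCoeff : (ℂ →L[ℝ] ℂ) →L[ℝ] ℂ :=
  (1 / 2 : ℂ) • (ContinuousLinearMap.apply ℝ ℂ 1 - I • ContinuousLinearMap.apply ℝ ℂ I)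

/-- The coefficient of `dz̄` in a real-linear form on `ℂ`. -/
noncomputable def dzbarCoeff : (ℂ →L[ℝ] ℂ) →L[ℝ] ℂ :=
  (1 / 2 : ℂ) • (ContinuousLinearMap.apply ℝ ℂ 1 + I • ContinuousLinearMap.apply ℝ ℂ I)

lemma wirtingerForm_apply (a b v : ℂ) : wirtingerForm a b v = a * v + b * conj v :=
  rfl

lemma dzCoeff_apply (T : ℂ →L[ℝ] ℂ) : dzCoeff T = (1 / 2 : ℂ) * (T 1 - I * T I) :=
  rfl

lemma dzbarCoeff_apply (T : ℂ →L[ℝ] ℂ) : dzbarCoeff T = (1 / 2 : ℂ) * (T 1 + I * T I) :=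
  rfl

lemma wirtingerZ_eq_dzCoeff_comp_fderiv (g : ℂ → ℂ) : wirtingerZ g = dzCoeff ∘ fderiv ℝ g :=
  rfl

lemma wirtingerZbar_eq_dzbarCoeff_comp_fderiv (g : ℂ → ℂ) :
    wirtingerZbar g = dzbarCoeff ∘ fderiv ℝ g :=
  rfl

lemma dzCoeff_wirtingerForm (a b : ℂ) : dzCoeff (wirtingerForm a b) = a := by
  simp only [dzCoeff_apply, wirtingerForm_apply, map_one, conj_I]
  linear_combination (-(a - b) / 2) * I_sq

lemma dzbarCoeff_wirtingerForm (a b : ℂ) : dzbarCoeff (wirtingerForm a b) = b := by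
  simp only [dzbarCoeff_apply, wirtingerForm_apply, map_one, conj_I]
  linear_combination ((a - b) / 2) * I_sq

lemma wirtingerForm_dzCoeff_dzbarCoeff (T : ℂ →L[ℝ] ℂ) :
    wirtingerForm (dzCoeff T) (dzbarCoeff T) = T := by
  refine ContinuousLinearMap.ext fun v ↦ ?_
  have hTv : T v = v.re * T 1 + v.im * T I := by
    have hv : v = v.re • (1 : ℂ) + v.im • I := by simp
    conv_lhs => rw [hv, map_add, map_smul, map_smul, real_smul, real_smul]
  have hv_conj : conj v = v.re - v.im * I := by simp [Complex.ext_iff]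
  rw [wirtingerForm_apply, dzCoeff_apply, dzbarCoeff_apply, hTv, hv_conj]
  nth_rw 1 [← re_add_im v]
  linear_combination (-(v.im : ℂ) * T I) * I_sq

lemma analyticAt_wirtingerForm {E : Type*} [NormedAddCommGroup E] [NormedSpace ℝ E]
    {a b : E → ℂ} {x : E} (ha : AnalyticAt ℝ a x) (hb : AnalyticAt ℝ b x) :
    AnalyticAt ℝ (fun y ↦ wirtingerForm (a y) (b y)) x :=
  (ha.smul analyticAt_const).add (hb.smul analyticAt_const)

variable {f g : ℂ → ℂ} {z a b : ℂ}

lemma hasFDerivAt_wirtingerForm (hg : DifferentiableAt ℝ g z) :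
    HasFDerivAt g (wirtingerForm (wirtingerZ g z) (wirtingerZbar g z)) z := by
  simpa only [wirtingerZ_eq_dzCoeff_comp_fderiv, wirtingerZbar_eq_dzbarCoeff_comp_fderiv,
    Function.comp_apply, wirtingerForm_dzCoeff_dzbarCoeff] using hg.hasFDerivAt

lemma wirtingerZ_eq_of_hasFDerivAt (hg : HasFDerivAt g (wirtingerForm a b) z) :
    wirtingerZ g z = a := by
  rw [wirtingerZ_eq_dzCoeff_comp_fderiv, Function.comp_apply, hg.fderiv, dzCoeff_wirtingerForm]

lemma wirtingerZbar_eq_of_hasFDerivAt (hg : HasFDerivAt g (wirtingerForm a b) z) :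
    wirtingerZbar g z = b := by
  rw [wirtingerZbar_eq_dzbarCoeff_comp_fderiv, Function.comp_apply, hg.fderiv,
    dzbarCoeff_wirtingerForm]

lemma wirtingerZ_congr (h : f =ᶠ[𝓝 z] g) : wirtingerZ f z = wirtingerZ g z := by
  simp only [wirtingerZ_eq_dzCoeff_comp_fderiv, Function.comp_apply, h.fderiv_eq]

lemma wirtingerZbar_congr (h : f =ᶠ[𝓝 z] g) : wirtingerZbar f z = wirtingerZbar g z := by
  simp only [wirtingerZbar_eq_dzbarCoeff_comp_fderiv, Function.comp_apply, h.fderiv_eq]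

lemma hasFDerivAt_conj (hg : HasFDerivAt g (wirtingerForm a b) z) :
    HasFDerivAt (fun w ↦ conj (g w)) (wirtingerForm (conj b) (conj a)) z := by
  refine (conjCLE.hasFDerivAt.comp z hg).congr_fderiv (ContinuousLinearMap.ext fun v ↦ ?_)
  simp [wirtingerForm_apply, add_comm]

lemma wirtingerZ_conj (hg : DifferentiableAt ℝ g z) :
    wirtingerZ (fun w ↦ conj (g w)) z = conj (wirtingerZbar g z) :=
  wirtingerZ_eq_of_hasFDerivAt (hasFDerivAt_conj (hasFDerivAt_wirtingerForm hg))

lemma wirtingerZbar_conj (hg : DifferentiableAt ℝ g z) :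
    wirtingerZbar (fun w ↦ conj (g w)) z = conj (wirtingerZ g z) :=
  wirtingerZbar_eq_of_hasFDerivAt (hasFDerivAt_conj (hasFDerivAt_wirtingerForm hg))

lemma wirtingerZbar_comp_prodMk {G : ℂ × ℂ → ℂ} (hG : DifferentiableAt ℂ G (z, g z))
    (hg : DifferentiableAt ℝ g z) :
    wirtingerZbar (fun w ↦ G (w, g w)) z =
      fderiv ℂ G (z, g z) (0, 1) * wirtingerZbar g z := by
  set G' := fderiv ℂ G (z, g z)
  have hG'_apply (v w : ℂ) : G' (v, w) = G' (1, 0) * v + G' (0, 1) * w := by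
    have hvw : (v, w) = v • ((1, 0) : ℂ × ℂ) + w • ((0, 1) : ℂ × ℂ) := by simp
    rw [hvw, map_add, map_smul, map_smul, smul_eq_mul, smul_eq_mul, mul_comm v, mul_comm w]
  refine wirtingerZbar_eq_of_hasFDerivAt (a := G' (1, 0) + G' (0, 1) * wirtingerZ g z) ?_
  refine ((hG.hasFDerivAt.restrictScalars ℝ).comp z
    ((hasFDerivAt_id z).prodMk (hasFDerivAt_wirtingerForm hg))).congr_fderiv
      (ContinuousLinearMap.ext fun v ↦ ?_)
  change G' (v, wirtingerForm _ _ v) = _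
  rw [hG'_apply, wirtingerForm_apply, wirtingerForm_apply]
  ring

lemma contDiffAt_wirtingerZ {m n : ℕ∞ω} (hf : ContDiffAt ℝ n f z) (hmn : m + 1 ≤ n) :
    ContDiffAt ℝ m (wirtingerZ f) z :=
  dzCoeff.contDiff.contDiffAt.comp z (hf.fderiv_right hmn)

lemma contDiffAt_wirtingerZbar {m n : ℕ∞ω} (hf : ContDiffAt ℝ n f z) (hmn : m + 1 ≤ n) :
    ContDiffAt ℝ m (wirtingerZbar f) z :=
  dzbarCoeff.contDiff.contDiffAt.comp z (hf.fderiv_right hmn)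

lemma wirtingerZ_wirtingerZbar_comm (hf : ContDiffAt ℝ 2 f z) :
    wirtingerZ (wirtingerZbar f) z = wirtingerZbar (wirtingerZ f) z := by
  have hdiff : DifferentiableAt ℝ (fderiv ℝ f) z :=
    (hf.fderiv_right (m := 1) (by norm_num)).differentiableAt one_ne_zero
  have hsymm : fderiv ℝ (fderiv ℝ f) z 1 I = fderiv ℝ (fderiv ℝ f) z I 1 :=
    hf.isSymmSndFDerivAt (by simp) 1 I
  have hZ : fderiv ℝ (wirtingerZ f) z = dzCoeff ∘L fderiv ℝ (fderiv ℝ f) z :=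
    (dzCoeff.hasFDerivAt.comp z hdiff.hasFDerivAt).fderiv
  have hZbar : fderiv ℝ (wirtingerZbar f) z = dzbarCoeff ∘L fderiv ℝ (fderiv ℝ f) z :=
    (dzbarCoeff.hasFDerivAt.comp z hdiff.hasFDerivAt).fderiv
  rw [wirtingerZ_eq_dzCoeff_comp_fderiv, wirtingerZbar_eq_dzbarCoeff_comp_fderiv (wirtingerZ f),
    Function.comp_apply, Function.comp_apply, hZ, hZbar]
  simp only [dzCoeff_apply, dzbarCoeff_apply, ContinuousLinearMap.comp_apply, hsymm]
  ring

lemma wirtingerZ_wirtingerZbar_eq_fderiv_mul {G : ℂ × ℂ → ℂ} (hg : ContDiffAt ℝ 2 g z)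
    (hG : DifferentiableAt ℂ G (z, g z)) (heq : ∀ᶠ w in 𝓝 z, wirtingerZ g w = G (w, g w)) :
    wirtingerZ (wirtingerZbar g) z = fderiv ℂ G (z, g z) (0, 1) * wirtingerZbar g z := by
  rw [wirtingerZ_wirtingerZbar_comm hg, wirtingerZbar_congr heq,
    wirtingerZbar_comp_prodMk hG (hg.differentiableAt two_ne_zero)]

end Wirtinger

section RealValued

variable {f : ℂ → ℂ} {G : ℂ × ℂ → ℂ} {z : ℂ}

lemma wirtingerZbar_eq_conj_wirtingerZ (hf : DifferentiableAt ℝ f z)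
    (hf_real : ∀ᶠ w in 𝓝 z, conj (f w) = f w) : wirtingerZbar f z = conj (wirtingerZ f z) := by
  rw [← wirtingerZbar_conj hf, wirtingerZbar_congr hf_real]

lemma conj_wirtingerZbar_wirtingerZ (hf : ContDiffAt ℝ 2 f z)
    (hf_real : ∀ᶠ w in 𝓝 z, conj (f w) = f w) :
    conj (wirtingerZbar (wirtingerZ f) z) = wirtingerZbar (wirtingerZ f) z := by
  have hfz : DifferentiableAt ℝ (wirtingerZ f) z :=
    (contDiffAt_wirtingerZ (m := 1) hf (by norm_num)).differentiableAt one_ne_zero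
  have hfzbar : (fun w ↦ conj (wirtingerZ f w)) =ᶠ[𝓝 z] wirtingerZbar f := by
    filter_upwards [hf.eventually (by simp), hf_real.eventually_nhds] with w hw hw_real
    exact (wirtingerZbar_eq_conj_wirtingerZ (hw.differentiableAt two_ne_zero) hw_real).symm
  rw [← wirtingerZ_conj hfz, wirtingerZ_congr hfzbar, wirtingerZ_wirtingerZbar_comm hf]

lemma analyticAt_of_analyticAt_wirtingerZ (hf : ∀ᶠ w in 𝓝 z, DifferentiableAt ℝ f w)
    (hf_real : ∀ᶠ w in 𝓝 z, conj (f w) = f w) (hfz : AnalyticAt ℝ (wirtingerZ f) z) :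
    AnalyticAt ℝ f z := by
  have hfz_fst : AnalyticAt ℝ (fun v : ℂ × ℂ ↦ wirtingerZ f v.1) (z, f z) :=
    AnalyticAt.comp (g := wirtingerZ f) hfz analyticAt_fst
  have hdf : AnalyticAt ℝ
      (fun v : ℂ × ℂ ↦ wirtingerForm (wirtingerZ f v.1) (conj (wirtingerZ f v.1))) (z, f z) :=
    analyticAt_wirtingerForm hfz_fst (((conjCLE : ℂ →L[ℝ] ℂ).analyticAt _).comp hfz_fst)
  refine analyticAt_of_eventually_hasFDerivAt hdf ?_
  filter_upwards [hf, hf_real.eventually_nhds] with w hw hw_real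
  rw [← wirtingerZbar_eq_conj_wirtingerZ hw hw_real]
  exact hasFDerivAt_wirtingerForm hw

/-- The right-hand side of the total differential system `dp = G(z, p) dz + r dz̄`,
`dr = G_p(z, p) r dz + conj (G_p(z, p)) r dz̄`, as a function of `(z, p, r)`. For a real-valued `f`
with `f_zz = G(z, f_z)` it is solved by `p = f_z`, `r = f_zz̄`. -/
noncomputable def wirtingerSystem (G : ℂ × ℂ → ℂ) (q : ℂ × ℂ × ℂ) : ℂ →L[ℝ] ℂ × ℂ :=
  (wirtingerForm (G (q.1, q.2.1)) q.2.2).prod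
    (wirtingerForm (fderiv ℂ G (q.1, q.2.1) (0, 1) * q.2.2)
      (conj (fderiv ℂ G (q.1, q.2.1) (0, 1)) * q.2.2))

lemma analyticAt_wirtingerSystem {p r : ℂ} (hG : AnalyticAt ℂ G (z, p)) :
    AnalyticAt ℝ (wirtingerSystem G) (z, p, r) := by
  have hpoint : AnalyticAt ℝ (fun q : ℂ × ℂ × ℂ ↦ (q.1, q.2.1)) (z, p, r) :=
    ContDiffAt.analyticAt (by fun_prop)
  have hr : AnalyticAt ℝ (fun q : ℂ × ℂ × ℂ ↦ q.2.2) (z, p, r) :=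
    ContDiffAt.analyticAt (by fun_prop)
  have hGp : AnalyticAt ℂ (fun v ↦ fderiv ℂ G v (0, 1)) (z, p) :=
    ((ContinuousLinearMap.apply ℂ ℂ ((0, 1) : ℂ × ℂ)).analyticAt _).comp hG.fderiv
  have hG_point : AnalyticAt ℝ (fun q : ℂ × ℂ × ℂ ↦ G (q.1, q.2.1)) (z, p, r) :=
    hG.restrictScalars.comp_of_eq hpoint rfl
  have hGp_point : AnalyticAt ℝ (fun q : ℂ × ℂ × ℂ ↦ fderiv ℂ G (q.1, q.2.1) (0, 1)) (z, p, r) :=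
    hGp.restrictScalars.comp_of_eq hpoint rfl
  have hGp_conj : AnalyticAt ℝ (fun q : ℂ × ℂ × ℂ ↦ conj (fderiv ℂ G (q.1, q.2.1) (0, 1)))
      (z, p, r) :=
    ((conjCLE : ℂ →L[ℝ] ℂ).analyticAt _).comp hGp_point
  exact ((ContinuousLinearMap.prodₗᵢ (𝕜 := ℝ) (E := ℂ) (F := ℂ) (G := ℂ) ℝ)
    |>.toContinuousLinearEquiv.analyticAt _).comp
    ((analyticAt_wirtingerForm hG_point hr).prod
      (analyticAt_wirtingerForm (hGp_point.mul hr) (hGp_conj.mul hr)))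

lemma hasFDerivAt_wirtingerSystem (hf : ContDiffAt ℝ 3 f z)
    (hf_real : ∀ᶠ w in 𝓝 z, conj (f w) = f w)
    (hG : DifferentiableAt ℂ G (z, wirtingerZ f z))
    (heq : ∀ᶠ w in 𝓝 z, wirtingerZ (wirtingerZ f) w = G (w, wirtingerZ f w)) :
    HasFDerivAt (fun w ↦ (wirtingerZ f w, wirtingerZbar (wirtingerZ f) w))
      (wirtingerSystem G (z, wirtingerZ f z, wirtingerZbar (wirtingerZ f) z)) z := by
  have hfz : ContDiffAt ℝ 2 (wirtingerZ f) z := contDiffAt_wirtingerZ hf (by norm_num)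
  have hfzzbar : DifferentiableAt ℝ (wirtingerZbar (wirtingerZ f)) z :=
    (contDiffAt_wirtingerZbar (m := 1) hfz (by norm_num)).differentiableAt one_ne_zero
  have hfzzbar_real : ∀ᶠ w in 𝓝 z,
      conj (wirtingerZbar (wirtingerZ f) w) = wirtingerZbar (wirtingerZ f) w := by
    filter_upwards [hf.eventually (by simp), hf_real.eventually_nhds] with w hw hw_real
    exact conj_wirtingerZbar_wirtingerZ (hw.of_le (by norm_num)) hw_real
  have hdfz := hasFDerivAt_wirtingerForm (hfz.differentiableAt two_ne_zero)
  have hdfzzbar := hasFDerivAt_wirtingerForm hfzzbar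
  rw [heq.self_of_nhds] at hdfz
  rw [wirtingerZbar_eq_conj_wirtingerZ hfzzbar hfzzbar_real,
    wirtingerZ_wirtingerZbar_eq_fderiv_mul hfz hG heq, map_mul,
    hfzzbar_real.self_of_nhds] at hdfzzbar
  exact hdfz.prodMk hdfzzbar

theorem analyticAt_wirtingerZ_of_eventually_eq (hf : ContDiffAt ℝ 3 f z)
    (hf_real : ∀ᶠ w in 𝓝 z, conj (f w) = f w) (hG : AnalyticAt ℂ G (z, wirtingerZ f z))
    (heq : ∀ᶠ w in 𝓝 z, wirtingerZ (wirtingerZ f) w = G (w, wirtingerZ f w)) :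
    AnalyticAt ℝ (wirtingerZ f) z := by
  have hfz : ContinuousAt (wirtingerZ f) z :=
    (contDiffAt_wirtingerZ (m := 2) hf (by norm_num)).continuousAt
  have hG_near : ∀ᶠ w in 𝓝 z, AnalyticAt ℂ G (w, wirtingerZ f w) :=
    (continuousAt_id.prodMk hfz).eventually hG.eventually_analyticAt
  have hsystem : AnalyticAt ℝ (fun w ↦ (wirtingerZ f w, wirtingerZbar (wirtingerZ f) w)) z := by
    refine analyticAt_of_eventually_hasFDerivAt (analyticAt_wirtingerSystem hG) ?_
    filter_upwards [hf.eventually (by simp), hf_real.eventually_nhds, hG_near,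
      heq.eventually_nhds] with w hfw hfw_real hGw heqw
    exact hasFDerivAt_wirtingerSystem hfw hfw_real hGw.differentiableAt heqw
  exact analyticAt_fst.comp hsystem

end RealValued

lemma analyticAt_cubic {𝕜 : Type*} [NontriviallyNormedField 𝕜] {A B C D : 𝕜 → 𝕜} {z w : 𝕜}
    (hA : AnalyticAt 𝕜 A z) (hB : AnalyticAt 𝕜 B z) (hC : AnalyticAt 𝕜 C z)
    (hD : AnalyticAt 𝕜 D z) :
    AnalyticAt 𝕜 (fun q : 𝕜 × 𝕜 ↦ A q.1 * q.2 ^ 3 + B q.1 * q.2 ^ 2 + C q.1 * q.2 + D q.1)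
      (z, w) := by
  have hcoeff {f : 𝕜 → 𝕜} (hf : AnalyticAt 𝕜 f z) :
      AnalyticAt 𝕜 (fun q : 𝕜 × 𝕜 ↦ f q.1) (z, w) := hf.comp analyticAt_fst
  have hw : AnalyticAt 𝕜 (fun q : 𝕜 × 𝕜 ↦ q.2) (z, w) := analyticAt_snd
  exact ((((hcoeff hA).mul (hw.pow 3)).add ((hcoeff hB).mul (hw.pow 2))).add
    ((hcoeff hC).mul hw)).add (hcoeff hD)

theorem smooth_rigid_spherical_graphing_function_is_real_analytic_general {F : ℂ → ℝ}
    {G : ℂ × ℂ → ℂ} {z₀ : ℂ} (hF : ContDiffAt ℝ 3 F z₀)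
    (hG : AnalyticAt ℂ G (z₀, wirtingerZ (fun w ↦ (F w : ℂ)) z₀))
    (heq : ∀ᶠ z in 𝓝 z₀, wirtingerZ (wirtingerZ fun w ↦ (F w : ℂ)) z =
      G (z, wirtingerZ (fun w ↦ (F w : ℂ)) z)) :
    AnalyticAt ℝ F z₀ := by
  have hF_smooth : ContDiffAt ℝ 3 (fun w ↦ (F w : ℂ)) z₀ :=
    ofRealCLM.contDiff.contDiffAt.comp z₀ hF
  have hF_diff : ∀ᶠ z in 𝓝 z₀, DifferentiableAt ℝ (fun w ↦ (F w : ℂ)) z :=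
    (hF_smooth.eventually (by simp)).mono fun z hz ↦ hz.differentiableAt three_ne_zero
  have hF_real : ∀ᶠ z in 𝓝 z₀, conj (F z : ℂ) = F z :=
    .of_forall fun z ↦ conj_ofReal (F z)
  have hFz : AnalyticAt ℝ (wirtingerZ fun w ↦ (F w : ℂ)) z₀ :=
    analyticAt_wirtingerZ_of_eventually_eq hF_smooth hF_real hG heq
  exact (reCLM.analyticAt _).comp (analyticAt_of_analyticAt_wirtingerZ hF_diff hF_real hFz)

/-- Every `C^∞`-smooth real-valued function `F` on an open set `U ⊆ ℂ` satisfying the zero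
CR-curvature equation `F_zz = A (F_z)³ + B (F_z)² + C F_z + D`, with `A, B, C, D`
holomorphic on `U`, is real-analytic on `U`.  (Theorem 1.1, analytic content.) -/
theorem smooth_rigid_spherical_graphing_function_is_real_analytic
    (U : Set ℂ) (hU : IsOpen U)
    (F : ℂ → ℝ) (hF : ContDiffOn ℝ (⊤ : ℕ∞) F U)
    (A B C D : ℂ → ℂ)
    (hA : DifferentiableOn ℂ A U) (hB : DifferentiableOn ℂ B U)
    (hC : DifferentiableOn ℂ C U) (hD : DifferentiableOn ℂ D U)
    (heq : ∀ z ∈ U,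
      wirtingerZ (wirtingerZ (fun w => (F w : ℂ))) z =
        A z * (wirtingerZ (fun w => (F w : ℂ)) z) ^ 3
          + B z * (wirtingerZ (fun w => (F w : ℂ)) z) ^ 2
          + C z * wirtingerZ (fun w => (F w : ℂ)) z + D z) :
    AnalyticOnNhd ℝ F U := by
  intro z hz
  have hU_near : U ∈ 𝓝 z := hU.mem_nhds hz
  exact smooth_rigid_spherical_graphing_function_is_real_analytic_general
    ((hF.contDiffAt hU_near).of_le ENat.LEInfty.out)
    (analyticAt_cubic (hA.analyticAt hU_near) (hB.analyticAt hU_near) (hC.analyticAt hU_near)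
      (hD.analyticAt hU_near))
    (mem_of_superset hU_near heq)
end

section
/- Let U ⊆ ℂ be an open set and let F : U → ℂ be a C^∞-smooth function such that the Wirtinger derivative F_z is real-analytic on U. Then F is real-analytic on U. -/
open Complex

/-!
A power series for `F_z` at `z₀` in the real variables `x, y` also converges for complex `x, y`, so
`F_z` extends to a holomorphic function `k` near a real point of `ℂ²`. There `∂/∂z` is the
derivative in the constant direction `(1/2, -i/2)`, and integrating `k` along complex lines in that
direction gives a holomorphic `K`. Its restriction `G` to the real points is real-analytic
with `G_z = F_z` near `z₀`. Hence `(F - G)_z = 0`, which are the Cauchy-Riemann equations for the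
conjugate of `F - G`, so `F - G` is antiholomorphic and `F` is real-analytic.
-/

open Set Filter Metric
open scoped Topology NNReal ENNReal ComplexConjugate

theorem radius_pos_of_norm_le_norm_mul_pow {𝕜 𝕃 E E' F F' : Type*}
    [NontriviallyNormedField 𝕜] [NormedAddCommGroup E] [NormedSpace 𝕜 E]
    [NormedAddCommGroup F] [NormedSpace 𝕜 F]
    [NontriviallyNormedField 𝕃] [NormedAddCommGroup E'] [NormedSpace 𝕃 E']
    [NormedAddCommGroup F'] [NormedSpace 𝕃 F']
    {p : FormalMultilinearSeries 𝕜 E F} {q : FormalMultilinearSeries 𝕃 E' F'}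
    (hp : 0 < p.radius) {C D : ℝ} (hC : 0 < C) (hD : 0 ≤ D)
    (hq : ∀ n, ‖q n‖ ≤ ‖p n‖ * C ^ n * D) :
    0 < q.radius := by
  obtain ⟨r, hr_pos, hr⟩ := ENNReal.lt_iff_exists_nnreal_btwn.1 hp
  obtain ⟨M, -, hM⟩ := p.norm_mul_pow_le_of_lt_radius hr
  lift C to ℝ≥0 using hC.le
  have hradius : ((r / C : ℝ≥0) : ℝ≥0∞) ≤ q.radius := by
    refine q.le_radius_of_bound (M * D) fun n => ?_
    calc ‖q n‖ * ((r / C : ℝ≥0) : ℝ) ^ n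
        ≤ ‖p n‖ * C ^ n * D * ((r / C : ℝ≥0) : ℝ) ^ n := by gcongr; exact hq n
      _ = ‖p n‖ * (C * ((r / C : ℝ≥0) : ℝ)) ^ n * D := by ring
      _ = ‖p n‖ * r ^ n * D := by rw [NNReal.coe_div, mul_div_cancel₀ _ hC.ne']
      _ ≤ M * D := by gcongr; exact hM n
  exact (ENNReal.coe_pos.2 (div_pos (ENNReal.coe_pos.1 hr_pos) (NNReal.coe_pos.1 hC))).trans_le
    hradius

section ExtendScalars

variable {𝕜 𝕃 V E ι : Type*} [NontriviallyNormedField 𝕜] [NontriviallyNormedField 𝕃]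
  [NormedAddCommGroup V] [NormedSpace 𝕜 V]
  [NormedAddCommGroup E] [NormedSpace 𝕜 E] [NormedSpace 𝕃 E] [Fintype ι] {n : ℕ}

variable (𝕃) in
/-- The extension of scalars from `𝕜` to `𝕃` of the pullback of `f` along the linear map
`x ↦ ∑ j, x j • e j` from `ι → 𝕜` to `V`, written out in coordinates so that no tensor product is
needed. It complexifies the terms of a real power series; `e` need not be a basis. -/
noncomputable def extendScalarsAlong (f : ContinuousMultilinearMap 𝕜 (fun _ : Fin n => V) E)
    (e : ι → V) : ContinuousMultilinearMap 𝕃 (fun _ : Fin n => ι → 𝕃) E :=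
  ∑ r : Fin n → ι, ((ContinuousMultilinearMap.mkPiAlgebra 𝕃 (Fin n) 𝕃).compContinuousLinearMap
    fun i => ContinuousLinearMap.proj (r i)).smulRight (f fun i => e (r i))

theorem extendScalarsAlong_apply (f : ContinuousMultilinearMap 𝕜 (fun _ : Fin n => V) E)
    (e : ι → V) (y : Fin n → ι → 𝕃) :
    extendScalarsAlong 𝕃 f e y =
      ∑ r : Fin n → ι, (∏ i, y i (r i)) • f fun i => e (r i) := by
  simp [extendScalarsAlong]

theorem extendScalarsAlong_algebraMap [NormedAlgebra 𝕜 𝕃] [IsScalarTower 𝕜 𝕃 E]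
    (f : ContinuousMultilinearMap 𝕜 (fun _ : Fin n => V) E) (e : ι → V) (x : Fin n → ι → 𝕜) :
    extendScalarsAlong 𝕃 f e (fun i j => algebraMap 𝕜 𝕃 (x i j)) =
      f fun i => ∑ j, x i j • e j := by
  classical
  simp only [extendScalarsAlong_apply, f.map_sum, f.map_smul_univ, ← map_prod, algebraMap_smul]

theorem norm_extendScalarsAlong_le (f : ContinuousMultilinearMap 𝕜 (fun _ : Fin n => V) E)
    (e : ι → V) : ‖extendScalarsAlong 𝕃 f e‖ ≤ ‖f‖ * (∑ j, ‖e j‖) ^ n := by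
  classical
  refine ContinuousMultilinearMap.opNorm_le_bound (by positivity) fun y => ?_
  have hterm (r : Fin n → ι) : ‖(∏ i, y i (r i)) • f fun i => e (r i)‖ ≤
      (∏ i, ‖y i‖) * (‖f‖ * ∏ i, ‖e (r i)‖) := by
    rw [norm_smul, norm_prod]
    gcongr
    · exact norm_le_pi_norm _ _
    · exact f.le_opNorm _
  calc ‖extendScalarsAlong 𝕃 f e y‖
      ≤ ∑ r : Fin n → ι, (∏ i, ‖y i‖) * (‖f‖ * ∏ i, ‖e (r i)‖) := by
        rw [extendScalarsAlong_apply]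
        exact norm_sum_le_of_le _ fun r _ => hterm r
    _ = ‖f‖ * (∑ j, ‖e j‖) ^ n * ∏ i, ‖y i‖ := by
        rw [← Finset.mul_sum, ← Finset.mul_sum, ← Fintype.sum_pow (fun j => ‖e j‖), mul_comm]

variable (𝕃) in
theorem exists_analyticAt_extendScalars [NormedAlgebra 𝕜 𝕃] [IsScalarTower 𝕜 𝕃 E]
    [CompleteSpace E] {f : V → E} {v₀ : V} (hf : AnalyticAt 𝕜 f v₀) (e : ι → V) :
    ∃ g : (ι → 𝕃) → E, AnalyticAt 𝕃 g 0 ∧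
      ∀ᶠ x : ι → 𝕜 in 𝓝 0, g (fun j => algebraMap 𝕜 𝕃 (x j)) = f (v₀ + ∑ j, x j • e j) := by
  obtain ⟨p, hp⟩ := hf
  let q : FormalMultilinearSeries 𝕃 (ι → 𝕃) E := fun n => extendScalarsAlong 𝕃 (p n) e
  have hq : 0 < q.radius := by
    refine radius_pos_of_norm_le_norm_mul_pow hp.radius_pos (C := ∑ j, ‖e j‖ + 1) (by positivity)
      zero_le_one fun n => (norm_extendScalarsAlong_le (p n) e).trans ?_
    rw [mul_one]
    gcongr
    exact le_add_of_nonneg_right zero_le_one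
  refine ⟨q.sum, (q.hasFPowerSeriesOnBall hq).analyticAt, ?_⟩
  have hlim : Tendsto (fun x : ι → 𝕜 => ∑ j, x j • e j) (𝓝 0) (𝓝 0) := by
    have hcont : Continuous fun x : ι → 𝕜 => ∑ j, x j • e j := by fun_prop
    simpa using hcont.tendsto 0
  filter_upwards [hlim.eventually hp.eventually_hasSum] with x hx
  simp only [q, FormalMultilinearSeries.sum, extendScalarsAlong_algebraMap, hx.tsum_eq]

end ExtendScalars

section ParametricIntegral

theorem hasSum_intervalIntegral_of_hasFPowerSeriesOnBall {𝕜 E F : Type*}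
    [NontriviallyNormedField 𝕜] [NormedAddCommGroup E] [NormedSpace 𝕜 E]
    [NormedAddCommGroup F] [NormedSpace 𝕜 F] [NormedSpace ℝ F]
    {f : E → F} {p : FormalMultilinearSeries 𝕜 E F} {x₀ : E} {R : ℝ≥0∞}
    (hf : HasFPowerSeriesOnBall f p x₀ R) {γ : ℝ → E} (hγ : Continuous γ) {r : ℝ≥0} (hr : r < R)
    {a b : ℝ} (hγr : ∀ t ∈ uIcc a b, ‖γ t‖ ≤ r) :
    HasSum (fun n => ∫ t in a..b, p n fun _ => γ t) (∫ t in a..b, f (x₀ + γ t)) := by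
  refine intervalIntegral.hasSum_integral_of_dominated_convergence (fun n _ => ‖p n‖ * r ^ n)
    (fun n => Continuous.aestronglyMeasurable (by fun_prop))
    (fun n => .of_forall fun t ht => ?_)
    (.of_forall fun _ _ => p.summable_norm_mul_pow (hr.trans_le hf.r_le))
    intervalIntegrable_const (.of_forall fun t ht => hf.hasSum ?_)
  · exact (p n).le_opNorm_mul_pow_of_le
      ((pi_norm_const_le (γ t)).trans (hγr t (uIoc_subset_uIcc ht)))
  · rw [mem_eball_zero_iff]
    exact (ENNReal.coe_le_coe.2 (hγr t (uIoc_subset_uIcc ht))).trans_lt hr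

variable {𝕜 E E' F : Type*} [RCLike 𝕜] [NormedAddCommGroup E] [NormedSpace 𝕜 E]
  [NormedAddCommGroup E'] [NormedSpace 𝕜 E']
  [NormedAddCommGroup F] [NormedSpace 𝕜 F] [NormedSpace ℝ F] [SMulCommClass 𝕜 ℝ F]
  [CompleteSpace F]

theorem analyticAt_intervalIntegral_comp_clm {f : E' → F} {y₀ : E'} (hf : AnalyticAt 𝕜 f y₀)
    {A : ℝ → E →L[𝕜] E'} (hA : Continuous A) (a b : ℝ) :
    AnalyticAt 𝕜 (fun x => ∫ t in a..b, f (y₀ + A t x)) 0 := by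
  obtain ⟨p, R, hp⟩ := hf
  obtain ⟨C, hC, hAC⟩ : ∃ C > 0, ∀ t ∈ uIcc a b, ‖A t‖ ≤ C := by
    obtain ⟨C, hC⟩ := isCompact_uIcc.exists_bound_of_continuousOn hA.continuousOn
    exact ⟨max C 1, by positivity, fun t ht => (hC t ht).trans (le_max_left _ _)⟩
  let B (n : ℕ) (t : ℝ) := (p n).compContinuousLinearMap fun _ => A t
  have hB (n : ℕ) : Continuous (B n) :=
    (ContinuousMultilinearMap.compContinuousLinearMapLRight (p n)).cont.comp
      (continuous_pi fun _ => hA)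
  let q : FormalMultilinearSeries 𝕜 E F := fun n => ∫ t in a..b, B n t
  have hq : 0 < q.radius := by
    refine radius_pos_of_norm_le_norm_mul_pow hp.radius_pos hC (abs_nonneg (b - a)) fun n => ?_
    have hBn : ∀ t ∈ uIoc a b, ‖B n t‖ ≤ ‖p n‖ * C ^ n := fun t ht =>
      ((p n).norm_compContinuousLinearMap_le _).trans <| by
        rw [Fin.prod_const]
        gcongr
        exact hAC t (uIoc_subset_uIcc ht)
    exact intervalIntegral.norm_integral_le_of_norm_le_const hBn
  refine (q.hasFPowerSeriesOnBall hq).analyticAt.congr ?_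
  obtain ⟨r, hr_pos, hr⟩ := ENNReal.lt_iff_exists_nnreal_btwn.1 hp.r_pos
  have hr_pos : 0 < (r : ℝ) := mod_cast hr_pos
  filter_upwards [ball_mem_nhds (0 : E) (div_pos hr_pos hC)] with x hx
  have hAr : ∀ t ∈ uIcc a b, ‖A t x‖ ≤ r := fun t ht =>
    calc ‖A t x‖ ≤ C * ‖x‖ := (A t).le_of_opNorm_le (hAC t ht) x
      _ ≤ r := by
        rw [mem_ball_zero_iff, lt_div_iff₀' hC] at hx
        exact hx.le
  have hsum := hasSum_intervalIntegral_of_hasFPowerSeriesOnBall hp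
    (hA.clm_apply continuous_const) hr hAr
  have hq_apply (n : ℕ) : q n (fun _ => x) = ∫ t in a..b, p n fun _ => A t x :=
    ((ContinuousMultilinearMap.apply 𝕜 (fun _ : Fin n => E) F fun _ => x).intervalIntegral_comp_comm
      ((hB n).intervalIntegrable a b)).symm
  simp only [FormalMultilinearSeries.sum, hq_apply, hsum.tsum_eq]

end ParametricIntegral

theorem hasDerivAt_smul_integral_comp_smul {E : Type*} [NormedAddCommGroup E] [NormedSpace ℂ E]
    [CompleteSpace E] {f : ℂ → E} {R : ℝ} (hf : DifferentiableOn ℂ f (ball 0 R)) {z : ℂ}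
    (hz : z ∈ ball 0 R) :
    HasDerivAt (fun w => w • ∫ t in (0 : ℝ)..1, f (t • w)) (f z) z := by
  obtain ⟨g, hg⟩ := hf.isExactOn_ball
  have hFTC : ∀ w ∈ ball (0 : ℂ) R, w • ∫ t in (0 : ℝ)..1, f (t • w) = g w - g 0 := by
    intro w hw
    have hmem : ∀ t ∈ Icc (0 : ℝ) 1, 0 + t • w ∈ ball (0 : ℂ) R := fun t ht => by
      simpa using (convex_ball (0 : ℂ) R).smul_mem_of_zero_mem
        (mem_ball_self (pos_of_mem_ball hw)) hw ht
    simpa using intervalIntegral.integral_unitInterval_deriv_eq_sub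
      (hf.continuousOn.comp (by fun_prop) hmem) fun t ht => hg _ (hmem t ht)
  refine ((hg z hz).sub_const (g 0)).congr_of_eventuallyEq ?_
  filter_upwards [isOpen_ball.mem_nhds hz] using hFTC

section PrimitiveAlong

variable {E F : Type*} [NormedAddCommGroup E] [NormedSpace ℂ E] [NormedAddCommGroup F]
  [NormedSpace ℂ F]

/-- An antiderivative of `f` in the direction `v` near `x₀`, when `φ v = 1`: the integral of `f`
along the segment to `x` from the foot point `x - φ (x - x₀) • v`, which is the point of the
hyperplane `φ = φ x₀` on the complex line through `x` in the direction `v`. -/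
noncomputable def primitiveAlong (φ : StrongDual ℂ E) (v x₀ : E) (f : E → F) (x : E) : F :=
  φ (x - x₀) • ∫ t in (0 : ℝ)..1, f (x - φ (x - x₀) • v + (t • φ (x - x₀)) • v)

variable {φ : StrongDual ℂ E} {v x₀ : E} {f : E → F}

theorem primitiveAlong_add_smul (hφ : φ v = 1) (x : E) (s : ℂ) :
    primitiveAlong φ v x₀ f (x + s • v) = (φ (x - x₀) + s) •
      ∫ t in (0 : ℝ)..1, f (x - φ (x - x₀) • v + (t • (φ (x - x₀) + s)) • v) := by
  have hφs : φ (x + s • v - x₀) = φ (x - x₀) + s := by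
    rw [add_sub_right_comm, map_add, map_smul, hφ, smul_eq_mul, mul_one]
  have hfoot : x + s • v - (φ (x - x₀) + s) • v = x - φ (x - x₀) • v := by module
  simp only [primitiveAlong, hφs, hfoot]

variable [CompleteSpace F]

theorem analyticAt_primitiveAlong (φ : StrongDual ℂ E) (v : E) (hf : AnalyticAt ℂ f x₀) :
    AnalyticAt ℂ (primitiveAlong φ v x₀ f) x₀ := by
  let A (t : ℝ) : E →L[ℂ] E := .id ℂ E + ((t : ℂ) - 1) • φ.smulRight v
  have hA : Continuous A := by fun_prop
  have hA_apply (t : ℝ) (x : E) :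
      x₀ + A t (x - x₀) = x - φ (x - x₀) • v + (t • φ (x - x₀)) • v := by
    simp only [A, _root_.add_apply, ContinuousLinearMap.id_apply, _root_.smul_apply,
      ContinuousLinearMap.smulRight_apply, real_smul]
    module
  have hsub : AnalyticAt ℂ (fun x => x - x₀) x₀ := analyticAt_id.sub analyticAt_const
  have hintegral := (analyticAt_intervalIntegral_comp_clm hf hA 0 1).comp_of_eq hsub (sub_self x₀)
  simp only [Function.comp_def, hA_apply] at hintegral
  exact ((φ.analyticAt _).comp hsub).smul hintegral

theorem hasLineDerivAt_primitiveAlong (hφ : φ v = 1) {x : E} {R : ℝ} (hR : φ (x - x₀) ∈ ball 0 R)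
    (hf : ∀ τ ∈ ball (0 : ℂ) R, DifferentiableAt ℂ f (x - φ (x - x₀) • v + τ • v)) :
    HasLineDerivAt ℂ (primitiveAlong φ v x₀ f) (f x) x v := by
  have hline : DifferentiableOn ℂ (fun τ : ℂ => f (x - φ (x - x₀) • v + τ • v)) (ball 0 R) :=
    fun τ hτ => (DifferentiableAt.fun_comp' τ (hf τ hτ) (by fun_prop)).differentiableWithinAt
  let J (w : ℂ) : F := w • ∫ t in (0 : ℝ)..1, f (x - φ (x - x₀) • v + (t • w) • v)
  have hJ : HasDerivAt J (f x) (φ (x - x₀) + 0) := by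
    simpa only [add_zero, sub_add_cancel] using hasDerivAt_smul_integral_comp_smul hline hR
  simp only [HasLineDerivAt, primitiveAlong_add_smul hφ]
  exact hJ.comp_const_add

theorem exists_analyticAt_fderiv_apply_eq (hf : AnalyticAt ℂ f x₀) (hv : v ≠ 0) :
    ∃ g : E → F, AnalyticAt ℂ g x₀ ∧ ∀ᶠ x in 𝓝 x₀, fderiv ℂ g x v = f x := by
  obtain ⟨φ, hφ⟩ := SeparatingDual.exists_eq_one (R := ℂ) hv
  have hg := analyticAt_primitiveAlong φ v hf
  have hdiff : ∀ᶠ y in 𝓝 x₀ ×ˢ 𝓝 (0 : ℂ),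
      DifferentiableAt ℂ f (y.1 - φ (y.1 - x₀) • v + y.2 • v) := by
    have hcont : Continuous fun y : E × ℂ => y.1 - φ (y.1 - x₀) • v + y.2 • v := by fun_prop
    rw [← nhds_prod_eq]
    exact (hcont.tendsto' (x₀, 0) x₀ (by simp)).eventually
      (hf.eventually_analyticAt.mono fun _ => AnalyticAt.differentiableAt)
  obtain ⟨P, hP, Q, hQ, hPQ⟩ := eventually_prod_iff.1 hdiff
  obtain ⟨R, hR, hRQ⟩ := Metric.eventually_nhds_iff_ball.1 hQ
  have hφR : ∀ᶠ x in 𝓝 x₀, φ (x - x₀) ∈ ball 0 R :=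
    (Continuous.tendsto' (by fun_prop) x₀ 0 (by simp)).eventually (ball_mem_nhds 0 hR)
  refine ⟨primitiveAlong φ v x₀ f, hg, ?_⟩
  filter_upwards [hP, hφR, hg.eventually_analyticAt] with x hxP hxR hgx
  rw [← hgx.differentiableAt.lineDeriv_eq_fderiv]
  exact (hasLineDerivAt_primitiveAlong hφ hxR fun τ hτ => hPQ hxP (hRQ τ hτ)).lineDeriv

end PrimitiveAlong

theorem wirtingerZ_sub {f g : ℂ → ℂ} {z : ℂ} (hf : DifferentiableAt ℝ f z)
    (hg : DifferentiableAt ℝ g z) :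
    wirtingerZ (fun w => f w - g w) z = wirtingerZ f z - wirtingerZ g z := by
  simp only [wirtingerZ, fderiv_fun_sub hf hg, _root_.sub_apply]
  ring

theorem wirtingerZ_comp {E : Type*} [NormedAddCommGroup E] [NormedSpace ℂ E] {g : E → ℂ}
    {h : ℂ → E} {h' : ℂ →L[ℝ] E} {z : ℂ} (hg : DifferentiableAt ℂ g (h z))
    (hh : HasFDerivAt h h' z) :
    wirtingerZ (fun w => g (h w)) z = fderiv ℂ g (h z) ((1 / 2 : ℂ) • (h' 1 - I • h' I)) := by
  have hfderiv : fderiv ℝ (fun w => g (h w)) z = _ :=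
    ((hg.hasFDerivAt.restrictScalars ℝ).comp z hh).fderiv
  simp [wirtingerZ, hfderiv]

/-- The embedding `z ↦ (re z, im z)` of the plane as the real points of `ℂ²`, on which real-analytic
functions of `z` become restrictions of holomorphic ones. -/
noncomputable def reImCLM : ℂ →L[ℝ] Fin 2 → ℂ :=
  .pi ![ofRealCLM ∘L reCLM, ofRealCLM ∘L imCLM]

theorem exists_analyticAt_comp_reImCLM {E : Type*} [NormedAddCommGroup E] [NormedSpace ℂ E]
    [CompleteSpace E] {g : ℂ → E} {z₀ : ℂ} (hg : AnalyticAt ℝ g z₀) :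
    ∃ k : (Fin 2 → ℂ) → E, AnalyticAt ℂ k 0 ∧ ∀ᶠ z in 𝓝 z₀, k (reImCLM (z - z₀)) = g z := by
  obtain ⟨k, hk, hkg⟩ := exists_analyticAt_extendScalars ℂ hg ![1, I]
  refine ⟨k, hk, ?_⟩
  have hlim : Tendsto (fun z => ![(z - z₀).re, (z - z₀).im]) (𝓝 z₀) (𝓝 0) :=
    Continuous.tendsto' (by fun_prop) z₀ 0 (by simp)
  filter_upwards [hlim.eventually hkg] with z hz
  have hreIm : reImCLM (z - z₀) =
      fun j => algebraMap ℝ ℂ (![(z - z₀).re, (z - z₀).im] j) := by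
    ext j
    fin_cases j <;> rfl
  have hsum : ∑ j, ![(z - z₀).re, (z - z₀).im] j • ![1, I] j = z - z₀ := by
    simpa [Fin.sum_univ_two] using re_add_im (z - z₀)
  rw [hreIm, hz, hsum, add_sub_cancel]

theorem exists_analyticAt_wirtingerZ_eventuallyEq {g : ℂ → ℂ} {z₀ : ℂ} (hg : AnalyticAt ℝ g z₀) :
    ∃ G : ℂ → ℂ, AnalyticAt ℝ G z₀ ∧ wirtingerZ G =ᶠ[𝓝 z₀] g := by
  obtain ⟨k, hk, hkg⟩ := exists_analyticAt_comp_reImCLM hg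
  have hdir : (1 / 2 : ℂ) • (reImCLM 1 - I • reImCLM I) ≠ 0 := fun h => by
    simpa [reImCLM] using congrFun h 0
  obtain ⟨K, hK, hKk⟩ := exists_analyticAt_fderiv_apply_eq hk hdir
  let h (z : ℂ) : Fin 2 → ℂ := reImCLM (z - z₀)
  have hh (z : ℂ) : HasFDerivAt h reImCLM z :=
    reImCLM.hasFDerivAt.comp z ((hasFDerivAt_id z).sub_const z₀)
  have hh_zero : h z₀ = 0 := by simp [h]
  have hh_analytic : AnalyticAt ℝ h z₀ :=
    (reImCLM.analyticAt _).comp (analyticAt_id.sub analyticAt_const)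
  have hlim : Tendsto h (𝓝 z₀) (𝓝 0) := hh_zero ▸ (hh z₀).continuousAt
  refine ⟨fun z => K (h z), hK.restrictScalars.comp_of_eq hh_analytic hh_zero, ?_⟩
  filter_upwards [hkg, hlim.eventually hKk, hlim.eventually hK.eventually_analyticAt]
    with z hkz hKz hKan
  calc wirtingerZ (fun w => K (h w)) z
      = fderiv ℂ K (h z) ((1 / 2 : ℂ) • (reImCLM 1 - I • reImCLM I)) :=
        wirtingerZ_comp hKan.differentiableAt (hh z)
    _ = k (h z) := hKz
    _ = g z := hkz

theorem differentiableAt_conj_comp_iff_wirtingerZ_eq_zero {f : ℂ → ℂ} {z : ℂ}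
    (hf : DifferentiableAt ℝ f z) :
    DifferentiableAt ℂ (fun w => conj (f w)) z ↔ wirtingerZ f z = 0 := by
  have hconj : HasFDerivAt (fun w => conj (f w))
      (conjCLE.toContinuousLinearMap ∘L fderiv ℝ f z) z :=
    conjCLE.toContinuousLinearMap.hasFDerivAt.comp z hf.hasFDerivAt
  have hCR : conj (fderiv ℝ f z I) = I * conj (fderiv ℝ f z 1) ↔
      fderiv ℝ f z 1 - I * fderiv ℝ f z I = 0 := by
    rw [← (starRingEnd ℂ).injective.eq_iff, map_mul, conj_I, conj_conj, conj_conj]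
    constructor <;> intro h
    · linear_combination (-I) * h + fderiv ℝ f z 1 * I_sq
    · linear_combination I * h + fderiv ℝ f z I * I_sq
  rw [differentiableAt_complex_iff_differentiableAt_real, hconj.fderiv]
  simpa [hconj.differentiableAt, wirtingerZ] using hCR

theorem analyticAt_of_eventually_wirtingerZ_eq_zero {f : ℂ → ℂ} {z₀ : ℂ}
    (hf : ∀ᶠ z in 𝓝 z₀, DifferentiableAt ℝ f z) (hfz : ∀ᶠ z in 𝓝 z₀, wirtingerZ f z = 0) :
    AnalyticAt ℝ f z₀ := by
  have hconj : AnalyticAt ℂ (fun z => conj (f z)) z₀ := by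
    rw [analyticAt_iff_eventually_differentiableAt]
    filter_upwards [hf, hfz] with z hz hz0
    exact (differentiableAt_conj_comp_iff_wirtingerZ_eq_zero hz).2 hz0
  simpa [Function.comp_def] using
    (conjCLE.toContinuousLinearMap.analyticAt _).comp (hconj.restrictScalars (𝕜 := ℝ))

theorem real_analytic_of_wirtingerZ_real_analytic_general {F : ℂ → ℂ} {z₀ : ℂ}
    (hF : ∀ᶠ z in 𝓝 z₀, DifferentiableAt ℝ F z) (hFz : AnalyticAt ℝ (wirtingerZ F) z₀) :
    AnalyticAt ℝ F z₀ := by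
  obtain ⟨G, hG, hGz⟩ := exists_analyticAt_wirtingerZ_eventuallyEq hFz
  have hGdiff : ∀ᶠ z in 𝓝 z₀, DifferentiableAt ℝ G z :=
    hG.eventually_analyticAt.mono fun _ => AnalyticAt.differentiableAt
  have hFG : AnalyticAt ℝ (fun z => F z - G z) z₀ := by
    have hdiff : ∀ᶠ z in 𝓝 z₀, DifferentiableAt ℝ (fun w => F w - G w) z := by
      filter_upwards [hF, hGdiff] with z hFd hGd using hFd.sub hGd
    refine analyticAt_of_eventually_wirtingerZ_eq_zero hdiff ?_
    filter_upwards [hF, hGdiff, hGz] with z hFd hGd hz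
    rw [wirtingerZ_sub hFd hGd, hz, sub_self]
  simpa using hFG.fun_add hG

/-- If `F` is `C^∞`-smooth on an open set `U ⊆ ℂ` and its Wirtinger derivative `F_z` is
real-analytic on `U`, then `F` itself is real-analytic on `U` (integration step: locally
`F = ∫ F_z dz + φ(z̄)` with `φ` antiholomorphic). -/
theorem real_analytic_of_wirtingerZ_real_analytic
    (U : Set ℂ) (hU : IsOpen U)
    (F : ℂ → ℂ) (hF : ContDiffOn ℝ (⊤ : ℕ∞) F U)
    (hFz : AnalyticOnNhd ℝ (wirtingerZ F) U) :
    AnalyticOnNhd ℝ F U := by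
  exact fun z hz => real_analytic_of_wirtingerZ_real_analytic_general
    ((hF.differentiableOn (by simp)).eventually_differentiableAt (hU.mem_nhds hz)) (hFz z hz)
end

section
/- Let U ⊆ ℂ be an open set and let μ : U → ℂ be a C^∞-smooth function satisfying μ_{zz̄z̄} − 3·μ_{zz̄}·μ + 2·μ_z·μ² − μ_z·μ_{z̄} = 0 at every point of U. Then μ is real-analytic on U. -/
open Complex

/-!
In the unknowns `u = (conj μ, μ_z, μ_{zz̄} - μ μ_z)` Loboda's equation becomes a first order system
`∂̄u = Q(u, conj u)` with polynomial right hand side. Every `C¹` solution of such a system is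
real-analytic, by the following argument.

Rescaling a small disc to the unit disc turns the system into `∂̄v = ε Q(v, conj v)` with `ε` small,
and the Cauchy–Pompeiu formula turns this into `v = h + ε T Q(v, conj v)`, where `h` is the Cauchy
integral of the boundary values of `v` and `T` is the right inverse of `∂̄` whose values have
vanishing Cauchy integral. The absolutely convergent series `∑ p (j, k) z ^ j * conj z ^ k` form a
Banach algebra on which `T` is bounded, and `h` belongs to it because the Fourier coefficients of a
`C¹` function are absolutely summable. For small `ε` the contraction principle therefore gives a
solution `p` which is such a series. Since `v` and `p` solve the same equation, which is also
contracting in the supremum norm, `v = p`.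
-/

open Filter Metric Set Topology
open scoped Real NNReal ComplexConjugate

section Wirtinger

variable {f g : ℂ → ℂ} {z : ℂ} {U : Set ℂ} {n : WithTop ℕ∞}

lemma fderiv_apply_eq_wirtinger (f : ℂ → ℂ) (z h : ℂ) :
    fderiv ℝ f z h = wirtingerZ f z * h + wirtingerZbar f z * conj h := by
  have fderiv_coord : fderiv ℝ f z h = h.re * fderiv ℝ f z 1 + h.im * fderiv ℝ f z I := by
    conv_lhs => rw [← re_add_im h, ← mul_one (h.re : ℂ), ← real_smul, ← real_smul, map_add,
      map_smul, map_smul, real_smul, real_smul]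
  have conj_coord : conj h = h.re - h.im * I := by
    rw [← re_add_im (conj h), conj_re, conj_im, ofReal_neg, neg_mul, sub_eq_add_neg]
  rw [fderiv_coord, wirtingerZ, wirtingerZbar, conj_coord]
  linear_combination h.im * fderiv ℝ f z I * I_sq
    + (1 / 2) * (fderiv ℝ f z 1 - I * fderiv ℝ f z I) * re_add_im h

lemma norm_div_mul_fderiv_sub_fderiv_le (f : ℂ → ℂ) (z : ℂ) {a : ℂ} (ha : a ≠ 0) (b : ℂ) :
    ‖b / a * fderiv ℝ f z a - fderiv ℝ f z b‖ ≤ 2 * ‖b‖ * ‖wirtingerZbar f z‖ := by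
  have cancel : b / a * fderiv ℝ f z a - fderiv ℝ f z b =
      wirtingerZbar f z * (b / a * conj a - conj b) := by
    rw [fderiv_apply_eq_wirtinger, fderiv_apply_eq_wirtinger]
    field_simp
    ring
  have norm_le : ‖b / a * conj a - conj b‖ ≤ 2 * ‖b‖ := by
    refine (norm_sub_le _ _).trans_eq ?_
    rw [norm_mul, norm_div, norm_conj, norm_conj, div_mul_cancel₀ _ (norm_ne_zero_iff.2 ha)]
    ring
  rw [cancel, norm_mul, mul_comm]
  gcongr

lemma wirtingerZbar_fun_sub (hf : DifferentiableAt ℝ f z) (hg : DifferentiableAt ℝ g z) :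
    wirtingerZbar (fun w => f w - g w) z = wirtingerZbar f z - wirtingerZbar g z := by
  simp only [wirtingerZbar, fderiv_fun_sub hf hg, sub_apply]
  ring

lemma wirtingerZbar_fun_const_mul (c : ℂ) (hf : DifferentiableAt ℝ f z) :
    wirtingerZbar (fun w => c * f w) z = c * wirtingerZbar f z := by
  simp only [wirtingerZbar, fderiv_const_mul hf, smul_apply, smul_eq_mul]
  ring

lemma wirtingerZbar_fun_sum {ι : Type*} {s : Finset ι} {F : ι → ℂ → ℂ}
    (hF : ∀ i ∈ s, DifferentiableAt ℝ (F i) z) :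
    wirtingerZbar (fun w => ∑ i ∈ s, F i w) z = ∑ i ∈ s, wirtingerZbar (F i) z := by
  simp only [wirtingerZbar, fderiv_fun_sum hF, sum_apply, Finset.mul_sum,
    ← Finset.sum_add_distrib]

lemma wirtingerZbar_fun_mul (hf : DifferentiableAt ℝ f z) (hg : DifferentiableAt ℝ g z) :
    wirtingerZbar (fun w => f w * g w) z = wirtingerZbar f z * g z + f z * wirtingerZbar g z := by
  simp only [wirtingerZbar, fderiv_fun_mul hf hg, add_apply, smul_apply, smul_eq_mul]
  ring

lemma wirtingerZbar_conj_comp (f : ℂ → ℂ) (z : ℂ) :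
    wirtingerZbar (fun w => conj (f w)) z = conj (wirtingerZ f z) := by
  have fderiv_conj : fderiv ℝ (fun w => conj (f w)) z =
      (conjCLE : ℂ →L[ℝ] ℂ).comp (fderiv ℝ f z) := conjCLE.comp_fderiv
  simp only [wirtingerZbar, wirtingerZ, fderiv_conj, ContinuousLinearMap.comp_apply,
    ContinuousLinearEquiv.coe_coe, conjCLE_apply, map_mul, map_sub, map_div₀, map_one, conj_I,
    conj_ofNat]
  ring

lemma wirtingerZbar_of_differentiableAt (hf : DifferentiableAt ℂ f z) :
    wirtingerZbar f z = 0 := by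
  have fderiv_I : fderiv ℂ f z I = I * fderiv ℂ f z 1 := by
    rw [← smul_eq_mul, ← map_smul, smul_eq_mul, mul_one]
  rw [wirtingerZbar, hf.fderiv_restrictScalars ℝ, ContinuousLinearMap.coe_restrictScalars',
    fderiv_I]
  linear_combination (1 / 2) * fderiv ℂ f z 1 * I_sq

lemma wirtingerZbar_conj_pow (k : ℕ) (z : ℂ) :
    wirtingerZbar (fun w => conj w ^ (k + 1)) z = (k + 1) * conj z ^ k := by
  have wirtingerZ_pow : wirtingerZ (fun w => w ^ (k + 1)) z = (k + 1) * z ^ k := by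
    have hasFDerivAt_pow : HasFDerivAt (𝕜 := ℝ) (fun w : ℂ => w ^ (k + 1)) _ z :=
      (hasDerivAt_pow (k + 1) z).hasFDerivAt.restrictScalars ℝ
    rw [wirtingerZ, hasFDerivAt_pow.fderiv]
    simp only [ContinuousLinearMap.coe_restrictScalars', ContinuousLinearMap.toSpanSingleton_apply,
      smul_eq_mul, add_tsub_cancel_right, Nat.cast_add, Nat.cast_one]
    linear_combination (-(1 / 2) * (k + 1) * z ^ k) * I_sq
  simp only [← map_pow]
  rw [wirtingerZbar_conj_comp, wirtingerZ_pow]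
  simp only [map_mul, map_add, map_natCast, map_one, map_pow]

lemma contDiffOn_wirtingerZ (hU : IsOpen U) (hf : ContDiffOn ℝ (n + 1) f U) :
    ContDiffOn ℝ n (wirtingerZ f) U := by
  have contDiffOn_fderiv := hf.fderiv_of_isOpen hU le_rfl
  exact contDiffOn_const.mul ((contDiffOn_fderiv.clm_apply contDiffOn_const).sub
    (contDiffOn_const.mul (contDiffOn_fderiv.clm_apply contDiffOn_const)))

lemma contDiffOn_wirtingerZbar (hU : IsOpen U) (hf : ContDiffOn ℝ (n + 1) f U) :
    ContDiffOn ℝ n (wirtingerZbar f) U := by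
  have contDiffOn_fderiv := hf.fderiv_of_isOpen hU le_rfl
  exact contDiffOn_const.mul ((contDiffOn_fderiv.clm_apply contDiffOn_const).add
    (contDiffOn_const.mul (contDiffOn_fderiv.clm_apply contDiffOn_const)))

lemma fderiv_comp_affine {E F : Type*} [NormedAddCommGroup E] [NormedSpace ℝ E]
    [NormedAddCommGroup F] [NormedSpace ℝ F] (f : E → F) (c : E) (R : ℝ) (x : E) :
    fderiv ℝ (fun w => f (c + R • w)) x = R • fderiv ℝ f (c + R • x) := by
  rw [fderiv_comp_smul (f := fun w => f (c + w)) R, fderiv_comp_add_left]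

lemma wirtingerZbar_comp_affine (f : ℂ → ℂ) (c : ℂ) (R : ℝ) (z : ℂ) :
    wirtingerZbar (fun w => f (c + R • w)) z = R * wirtingerZbar f (c + R • z) := by
  rw [wirtingerZbar, fderiv_comp_affine]
  simp only [wirtingerZbar, smul_apply, real_smul]
  ring

end Wirtinger

section CauchyPompeiu

lemma hasDerivAt_intervalIntegral_of_continuousOn {E : Type*} [NormedAddCommGroup E]
    [NormedSpace ℝ E] {F F' : ℝ → ℝ → E} {W : Set (ℝ × ℝ)} {a b t₀ : ℝ} (hW : IsOpen W)
    (ht₀ : {t₀} ×ˢ uIcc a b ⊆ W) (hF : ContinuousOn (fun x => F x.1 x.2) W)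
    (hF' : ContinuousOn (fun x => F' x.1 x.2) W)
    (hderiv : ∀ x ∈ W, HasDerivAt (fun t => F t x.2) (F' x.1 x.2) x.1) :
    HasDerivAt (fun t => ∫ θ in a..b, F t θ) (∫ θ in a..b, F' t₀ θ) t₀ := by
  obtain ⟨N, J, N_open, -, t₀_mem, uIcc_subset, NJ_subset⟩ :=
    generalized_tube_lemma isCompact_singleton isCompact_uIcc hW ht₀
  obtain ⟨K, ⟨K_nhds, K_compact⟩, K_subset⟩ :=
    (compact_basis_nhds t₀).mem_iff.1 (N_open.mem_nhds (t₀_mem rfl))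
  have mem_W {t θ : ℝ} (ht : t ∈ K) (hθ : θ ∈ uIcc a b) : (t, θ) ∈ W :=
    NJ_subset ⟨K_subset ht, uIcc_subset hθ⟩
  have slice_continuousOn {G : ℝ → ℝ → E} (hG : ContinuousOn (fun x => G x.1 x.2) W) {t : ℝ}
      (ht : t ∈ K) : ContinuousOn (G t) (uIcc a b) :=
    ContinuousOn.comp (g := fun x => G x.1 x.2) (f := fun θ => (t, θ)) hG (by fun_prop)
      fun _ hθ => mem_W ht hθ
  have aestronglyMeasurable_slice {G : ℝ → ℝ → E} (hG : ContinuousOn (fun x => G x.1 x.2) W)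
      {t : ℝ} (ht : t ∈ K) : MeasureTheory.AEStronglyMeasurable (G t)
        (MeasureTheory.volume.restrict (uIoc a b)) :=
    (slice_continuousOn hG ht).intervalIntegrable.def'.aestronglyMeasurable
  obtain ⟨C, hC⟩ := (K_compact.prod isCompact_uIcc).exists_bound_of_continuousOn
    (hF'.mono (prod_subset_iff.2 fun _ ht _ hθ => mem_W ht hθ))
  refine (intervalIntegral.hasDerivAt_integral_of_dominated_loc_of_deriv_le (F := F) (F' := F')
    (bound := fun _ => C) K_nhds ?_ ?_ ?_ ?_ intervalIntegrable_const ?_).2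
  · filter_upwards [K_nhds] with t ht using aestronglyMeasurable_slice hF ht
  · exact (slice_continuousOn hF (mem_of_mem_nhds K_nhds)).intervalIntegrable
  · exact aestronglyMeasurable_slice hF' (mem_of_mem_nhds K_nhds)
  · exact .of_forall fun θ hθ t ht => hC (t, θ) ⟨ht, uIoc_subset_uIcc hθ⟩
  · exact .of_forall fun θ hθ t ht => hderiv (t, θ) (mem_W ht (uIoc_subset_uIcc hθ))

/-- The Cauchy integral of `f` over the circle `|ζ - c| = R`, as a function of `z`. -/
noncomputable def cauchyIntegral (f : ℂ → ℂ) (c : ℂ) (R : ℝ) (z : ℂ) : ℂ :=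
  (2 * π * I : ℂ)⁻¹ * ∮ ζ in C(c, R), (ζ - z)⁻¹ * f ζ

variable {f : ℂ → ℂ} {c z : ℂ} {R : ℝ}

/-- The circle `|ζ - c| = R` contracted towards `z` by the factor `t`; it sweeps out the disc from
the point `z` at `t = 0` to the full circle at `t = 1`. -/
noncomputable abbrev contractedCircle (c : ℂ) (R : ℝ) (z : ℂ) (t θ : ℝ) : ℂ :=
  z + t • (circleMap c R θ - z)

lemma contractedCircle_zero (c : ℂ) (R : ℝ) (z : ℂ) (θ : ℝ) : contractedCircle c R z 0 θ = z := by
  rw [contractedCircle, zero_smul, add_zero]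

lemma contractedCircle_one (c : ℂ) (R : ℝ) (z : ℂ) (θ : ℝ) :
    contractedCircle c R z 1 θ = circleMap c R θ := by
  rw [contractedCircle, one_smul, add_sub_cancel]

lemma contractedCircle_mem_ball (hz : z ∈ ball c R) {t : ℝ} (ht : t ∈ Ico (0 : ℝ) 1)
    (θ : ℝ) : contractedCircle c R z t θ ∈ ball c R := by
  have R_pos : 0 < R := pos_of_mem_ball hz
  have combo_mem := (convex_ball c R).combo_interior_closure_mem_interior
    (by rwa [isOpen_ball.interior_eq])
    (by rw [closure_ball c R_pos.ne']; exact circleMap_mem_closedBall c R_pos.le θ)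
    (sub_pos.2 ht.2) ht.1 (sub_add_cancel 1 t)
  rw [isOpen_ball.interior_eq] at combo_mem
  convert combo_mem using 1
  module

lemma contractedCircle_mem_closedBall (hz : z ∈ ball c R) {t : ℝ} (ht : t ∈ Icc (0 : ℝ) 1)
    (θ : ℝ) : contractedCircle c R z t θ ∈ closedBall c R := by
  rcases ht.2.eq_or_lt with rfl | t_lt
  · rw [contractedCircle_one]
    exact circleMap_mem_closedBall c (pos_of_mem_ball hz).le θ
  · exact ball_subset_closedBall (contractedCircle_mem_ball hz ⟨ht.1, t_lt⟩ θ)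

lemma continuous_deriv_circleMap (c : ℂ) (R : ℝ) : Continuous (deriv (circleMap c R)) :=
  (contDiff_circleMap c R (n := 1)).continuous_deriv le_rfl

lemma circleMap_sub_ne_zero (hz : z ∈ ball c R) (θ : ℝ) : circleMap c R θ - z ≠ 0 :=
  sub_ne_zero.2 (circleMap_ne_mem_ball hz θ)

lemma continuous_fderiv_contractedCircle (hf : ∀ w ∈ closedBall c R, ContDiffAt ℝ 1 f w)
    (hz : z ∈ ball c R) {t : ℝ} (ht : t ∈ Icc (0 : ℝ) 1) :
    Continuous fun θ : ℝ => fderiv ℝ f (contractedCircle c R z t θ) := by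
  refine continuous_iff_continuousAt.2 fun θ => ?_
  exact ContinuousAt.comp (f := fun θ : ℝ => contractedCircle c R z t θ)
    ((hf _ (contractedCircle_mem_closedBall hz ht θ)).continuousAt_fderiv one_ne_zero)
    (by fun_prop)

lemma integral_fderiv_contractedCircle (hf : ∀ w ∈ closedBall c R, ContDiffAt ℝ 1 f w)
    (hz : z ∈ ball c R) {t : ℝ} (ht : t ∈ Icc (0 : ℝ) 1) :
    ∫ θ in 0..2 * π, fderiv ℝ f (contractedCircle c R z t θ) (deriv (circleMap c R) θ) = 0 := by
  have integrable : IntervalIntegrable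
      (fun θ => fderiv ℝ f (contractedCircle c R z t θ) (deriv (circleMap c R) θ))
      MeasureTheory.volume 0 (2 * π) := by
    refine ((continuous_fderiv_contractedCircle hf hz ht).clm_apply ?_).intervalIntegrable _ _
    exact continuous_deriv_circleMap c R
  have closed : circleMap c R (2 * π) = circleMap c R 0 := (periodic_circleMap c R).eq
  rcases eq_or_ne t 0 with rfl | t_ne
  · have hasDerivAt_fderiv (θ : ℝ) : HasDerivAt (fun θ => fderiv ℝ f z (circleMap c R θ))
        (fderiv ℝ f z (deriv (circleMap c R) θ)) θ :=
      (fderiv ℝ f z).hasFDerivAt.comp_hasDerivAt θ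
        (differentiable_circleMap c R θ).hasDerivAt
    simp only [contractedCircle_zero] at integrable ⊢
    rw [intervalIntegral.integral_eq_sub_of_hasDerivAt (fun θ _ => hasDerivAt_fderiv θ) integrable,
      closed, sub_self]
  · have hasDerivAt_comp (θ : ℝ) :
        HasDerivAt (fun θ : ℝ => t⁻¹ • f (contractedCircle c R z t θ))
          (fderiv ℝ f (contractedCircle c R z t θ) (deriv (circleMap c R) θ)) θ := by
      have f_diff := (hf _ (contractedCircle_mem_closedBall hz ht θ)).differentiableAt
        one_ne_zero
      have hasDerivAt_curve :=
        (((differentiable_circleMap c R θ).hasDerivAt.sub_const z).const_smul t).const_add z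
      have hasDerivAt_smul :=
        (f_diff.hasFDerivAt.comp_hasDerivAt θ hasDerivAt_curve).const_smul t⁻¹
      rwa [map_smul, inv_smul_smul₀ t_ne] at hasDerivAt_smul
    rw [intervalIntegral.integral_eq_sub_of_hasDerivAt (fun θ _ => hasDerivAt_comp θ) integrable,
      contractedCircle, contractedCircle, closed, sub_self]

lemma norm_integral_div_mul_fderiv_contractedCircle_le {C : ℝ}
    (hf : ∀ w ∈ closedBall c R, ContDiffAt ℝ 1 f w)
    (hC : ∀ w ∈ ball c R, ‖wirtingerZbar f w‖ ≤ C) (hz : z ∈ ball c R) {t : ℝ}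
    (ht : t ∈ Ico (0 : ℝ) 1) :
    ‖∫ θ in 0..2 * π, deriv (circleMap c R) θ / (circleMap c R θ - z) *
      fderiv ℝ f (contractedCircle c R z t θ) (circleMap c R θ - z)‖ ≤ 2 * π * (2 * R * C) := by
  have R_pos : 0 < R := pos_of_mem_ball hz
  have fderiv_continuous :=
    continuous_fderiv_contractedCircle hf hz (Ico_subset_Icc_self ht)
  have pointwise (θ : ℝ) : ‖deriv (circleMap c R) θ / (circleMap c R θ - z) *
      fderiv ℝ f (contractedCircle c R z t θ) (circleMap c R θ - z) -
      fderiv ℝ f (contractedCircle c R z t θ) (deriv (circleMap c R) θ)‖ ≤ 2 * R * C := by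
    refine (norm_div_mul_fderiv_sub_fderiv_le f _ (circleMap_sub_ne_zero hz θ) _).trans ?_
    have norm_deriv : ‖deriv (circleMap c R) θ‖ = R := by
      simp [abs_of_pos R_pos]
    rw [norm_deriv]
    gcongr
    exact hC _ (contractedCircle_mem_ball hz ht θ)
  rw [← sub_zero (intervalIntegral _ _ _ _),
    ← integral_fderiv_contractedCircle hf hz (Ico_subset_Icc_self ht),
    ← intervalIntegral.integral_sub]
  · refine (intervalIntegral.norm_integral_le_of_norm_le_const fun θ _ => pointwise θ).trans_eq ?_
    rw [sub_zero, abs_of_pos Real.two_pi_pos, mul_comm]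
  · refine Continuous.intervalIntegrable (.mul (.div (continuous_deriv_circleMap c R) (by fun_prop)
      (circleMap_sub_ne_zero hz)) (fderiv_continuous.clm_apply (by fun_prop))) _ _
  · exact (fderiv_continuous.clm_apply (continuous_deriv_circleMap c R)).intervalIntegrable _ _

lemma hasDerivAt_integral_div_mul_comp_contractedCircle
    (hf : ∀ w ∈ closedBall c R, ContDiffAt ℝ 1 f w) (hz : z ∈ ball c R) {t : ℝ}
    (ht : t ∈ Icc (0 : ℝ) 1) :
    HasDerivAt (fun t : ℝ => ∫ θ in 0..2 * π, deriv (circleMap c R) θ / (circleMap c R θ - z) *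
        f (contractedCircle c R z t θ))
      (∫ θ in 0..2 * π, deriv (circleMap c R) θ / (circleMap c R θ - z) *
        fderiv ℝ f (contractedCircle c R z t θ) (circleMap c R θ - z)) t := by
  let curve : ℝ × ℝ → ℂ := fun x => contractedCircle c R z x.1 x.2
  have curve_continuous : Continuous curve := by fun_prop
  have kernel_continuous : Continuous fun x : ℝ × ℝ =>
      deriv (circleMap c R) x.2 / (circleMap c R x.2 - z) :=
    .div ((continuous_deriv_circleMap c R).comp continuous_snd)
      (by fun_prop) fun x => circleMap_sub_ne_zero hz x.2
  let W : Set (ℝ × ℝ) := {x | ContDiffAt ℝ 1 f (curve x)}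
  have W_open : IsOpen W :=
    (isOpen_iff_mem_nhds.2 fun w (hw : ContDiffAt ℝ 1 f w) =>
      hw.eventually (by simp)).preimage curve_continuous
  refine hasDerivAt_intervalIntegral_of_continuousOn
    (F' := fun t θ => deriv (circleMap c R) θ / (circleMap c R θ - z) *
      fderiv ℝ f (contractedCircle c R z t θ) (circleMap c R θ - z)) W_open ?_ ?_ ?_ ?_
  · rintro ⟨t, θ⟩ ⟨rfl, -⟩
    exact hf _ (contractedCircle_mem_closedBall hz ht θ)
  · exact kernel_continuous.continuousOn.mul fun x (hx : ContDiffAt ℝ 1 f (curve x)) =>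
      (hx.continuousAt.comp curve_continuous.continuousAt).continuousWithinAt
  · exact kernel_continuous.continuousOn.mul (.clm_apply
      (fun x (hx : ContDiffAt ℝ 1 f (curve x)) => ((hx.continuousAt_fderiv one_ne_zero).comp
        curve_continuous.continuousAt).continuousWithinAt) (by fun_prop))
  · rintro ⟨t, θ⟩ (hx : ContDiffAt ℝ 1 f (contractedCircle c R z t θ))
    have hasDerivAt_curve : HasDerivAt (fun t : ℝ => contractedCircle c R z t θ)
        (circleMap c R θ - z) t := by
      simpa using ((hasDerivAt_id t).smul_const (circleMap c R θ - z)).const_add z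
    exact ((hx.differentiableAt one_ne_zero).hasFDerivAt.comp_hasDerivAt t
      hasDerivAt_curve).const_mul _

theorem norm_sub_cauchyIntegral_le {C : ℝ} (hf : ∀ w ∈ closedBall c R, ContDiffAt ℝ 1 f w)
    (hC : ∀ w ∈ ball c R, ‖wirtingerZbar f w‖ ≤ C) (hz : z ∈ ball c R) :
    ‖f z - cauchyIntegral f c R z‖ ≤ 2 * R * C := by
  let J : ℝ → ℂ := fun t => ∫ θ in 0..2 * π, deriv (circleMap c R) θ / (circleMap c R θ - z) *
    f (contractedCircle c R z t θ)
  have J_sub_le : ‖J 1 - J 0‖ ≤ 2 * π * (2 * R * C) :=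
    norm_image_sub_le_of_norm_deriv_le_segment_01'
      (fun t ht => (hasDerivAt_integral_div_mul_comp_contractedCircle hf hz ht).hasDerivWithinAt)
      fun t ht => norm_integral_div_mul_fderiv_contractedCircle_le hf hC hz ht
  have J_one : J 1 = 2 * π * I * cauchyIntegral f c R z := by
    rw [cauchyIntegral, mul_inv_cancel_left₀ two_pi_I_ne_zero]
    simp only [J, circleIntegral, smul_eq_mul, contractedCircle_one, div_eq_mul_inv, mul_assoc]
  have J_zero : J 0 = 2 * π * I * f z := by
    rw [← circleIntegral.integral_sub_inv_of_mem_ball hz]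
    simp only [J, circleIntegral, contractedCircle_zero, intervalIntegral.integral_mul_const,
      smul_eq_mul, div_eq_mul_inv]
  rw [J_one, J_zero, ← mul_sub, norm_mul, norm_sub_rev] at J_sub_le
  have norm_two_pi_I : ‖(2 * π * I : ℂ)‖ = 2 * π := by simp [abs_of_pos Real.pi_pos]
  rw [norm_two_pi_I] at J_sub_le
  exact le_of_mul_le_mul_left J_sub_le Real.two_pi_pos

end CauchyPompeiu

/-- The Banach space of absolutely summable families of complex coefficients `(p a)`, regarded as
formal sums `∑ a, p a • single a`. For an additive monoid `α` it carries the convolution product,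
for which `single` is multiplicative; it is a type synonym because `lp` already carries pointwise
operations. -/
def EllOne (α : Type*) : Type _ := lp (fun _ : α => ℂ) 1

namespace EllOne

variable {α E : Type*}

noncomputable instance : NormedAddCommGroup (EllOne α) :=
  inferInstanceAs (NormedAddCommGroup (lp (fun _ : α => ℂ) 1))

noncomputable instance : NormedSpace ℂ (EllOne α) :=
  inferInstanceAs (NormedSpace ℂ (lp (fun _ : α => ℂ) 1))

instance : CompleteSpace (EllOne α) := inferInstanceAs (CompleteSpace (lp (fun _ : α => ℂ) 1))

instance : CoeFun (EllOne α) fun _ => α → ℂ := ⟨fun p => Subtype.val p⟩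

lemma norm_apply_le (p : EllOne α) (a : α) : ‖p a‖ ≤ ‖p‖ :=
  lp.norm_apply_le_norm (E := fun _ : α => ℂ) one_ne_zero p a

lemma hasSum_norm (p : EllOne α) : HasSum (fun a => ‖p a‖) ‖p‖ := by
  have hasSum_rpow := lp.hasSum_norm (p := 1) (by simp) (p : lp (fun _ : α => ℂ) 1)
  simp only [ENNReal.toReal_one, Real.rpow_one] at hasSum_rpow
  exact hasSum_rpow

/-- Conjugation of all coefficients. -/
noncomputable def conjCoeff : EllOne α →+ EllOne α :=
  (starAddEquiv (R := lp (fun _ : α => ℂ) 1)).toAddMonoidHom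

lemma conjCoeff_apply (p : EllOne α) (a : α) : conjCoeff p a = conj (p a) := rfl

lemma norm_conjCoeff (p : EllOne α) : ‖conjCoeff p‖ = ‖p‖ :=
  norm_star (E := lp (fun _ : α => ℂ) 1) p

section Single

variable [DecidableEq α]

/-- The basis vector of `EllOne α` indexed by `a`. -/
noncomputable def single (a : α) : EllOne α := lp.single 1 a (1 : ℂ)

lemma norm_single (a : α) : ‖single a‖ = 1 :=
  (lp.norm_single (E := fun _ : α => ℂ) one_pos a (1 : ℂ)).trans norm_one

lemma coe_single (a : α) : (single a : α → ℂ) = Pi.single a 1 := rfl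

lemma hasSum_smul_single (p : EllOne α) : HasSum (fun a => p a • single a) p := by
  have hasSum_single := lp.hasSum_single (E := fun _ : α => ℂ) ENNReal.one_ne_top p
  have single_eq_smul (a : α) : lp.single (E := fun _ : α => ℂ) 1 a (p a) = p a • single a := by
    conv_lhs => rw [← mul_one (p a), ← smul_eq_mul, lp.single_smul]
    rfl
  simp only [single_eq_smul] at hasSum_single
  exact hasSum_single

lemma ext_single [NormedAddCommGroup E] [NormedSpace ℂ E] {S T : EllOne α →L[ℂ] E}
    (h : ∀ a, S (single a) = T (single a)) : S = T := by
  ext p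
  have hasSum_S := (hasSum_smul_single p).mapL S
  have hasSum_T := (hasSum_smul_single p).mapL T
  simp only [map_smul, h] at hasSum_S hasSum_T
  exact hasSum_S.unique hasSum_T

end Single

section Lift

variable [NormedAddCommGroup E] [NormedSpace ℂ E] {b : α → E} {C : ℝ}

lemma norm_tsum_smul_le (hb : ∀ a, ‖b a‖ ≤ C) (p : EllOne α) : ‖∑' a, p a • b a‖ ≤ C * ‖p‖ := by
  rw [mul_comm]
  refine tsum_of_norm_bounded (p.hasSum_norm.mul_right C) fun a => ?_
  rw [norm_smul]
  gcongr
  exact hb a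

variable [CompleteSpace E]

lemma summable_smul (hb : ∀ a, ‖b a‖ ≤ C) (p : EllOne α) : Summable fun a => p a • b a :=
  .of_norm_bounded (p.hasSum_norm.summable.mul_right C) fun a => by
    rw [norm_smul]
    gcongr
    exact hb a

/-- The continuous linear map on `EllOne α` extending a bounded family `b`. -/
noncomputable def lift (b : α → E) (hb : ∀ a, ‖b a‖ ≤ C) : EllOne α →L[ℂ] E :=
  LinearMap.mkContinuous
    { toFun := fun p => ∑' a, p a • b a
      map_add' := fun p q => by
        rw [← (summable_smul hb p).tsum_add (summable_smul hb q)]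
        exact tsum_congr fun a => add_smul (p a) (q a) (b a)
      map_smul' := fun c p => by
        rw [RingHom.id_apply, ← (summable_smul hb p).tsum_const_smul]
        exact tsum_congr fun a => mul_smul c (p a) (b a) } C (norm_tsum_smul_le hb)

lemma lift_apply (hb : ∀ a, ‖b a‖ ≤ C) (p : EllOne α) : lift b hb p = ∑' a, p a • b a := rfl

lemma norm_lift_apply_le (hb : ∀ a, ‖b a‖ ≤ C) (p : EllOne α) : ‖lift b hb p‖ ≤ C * ‖p‖ :=
  norm_tsum_smul_le hb p

lemma lift_single [DecidableEq α] (hb : ∀ a, ‖b a‖ ≤ C) (a : α) : lift b hb (single a) = b a := by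
  rw [lift_apply, tsum_eq_single a]
  · rw [coe_single, Pi.single_eq_same, one_smul]
  · intro a' ha'
    rw [coe_single, Pi.single_eq_of_ne ha', zero_smul]

end Lift

section Algebra

variable [AddCommMonoid α] [DecidableEq α]

/-- Convolution, the continuous bilinear extension of `(single a, single b) ↦ single (a + b)`. -/
noncomputable def convolution : EllOne α →L[ℂ] EllOne α →L[ℂ] EllOne α :=
  lift (fun a => lift (fun b => single (a + b)) fun b => (norm_single (a + b)).le) fun _ =>
    ContinuousLinearMap.opNorm_le_bound _ zero_le_one fun p => norm_lift_apply_le _ p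

noncomputable instance : One (EllOne α) := ⟨single 0⟩

noncomputable instance : Mul (EllOne α) := ⟨fun p q => convolution p q⟩

lemma one_def : (1 : EllOne α) = single 0 := rfl

lemma mul_def (p q : EllOne α) : p * q = convolution p q := rfl

lemma single_mul_single (a b : α) : single a * single b = single (a + b) := by
  rw [mul_def, convolution, lift_single, lift_single]

lemma convolution_flip : (convolution (α := α)).flip = convolution :=
  ext_single fun a => ext_single fun b => by
    simp only [ContinuousLinearMap.flip_apply, ← mul_def, single_mul_single, add_comm]

lemma convolution_one : convolution (1 : EllOne α) = ContinuousLinearMap.id ℂ (EllOne α) :=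
  ext_single fun a => by
    rw [one_def, ← mul_def, single_mul_single, zero_add, ContinuousLinearMap.id_apply]

lemma convolution_mul (p q : EllOne α) :
    convolution (p * q) = (convolution p).comp (convolution q) := by
  let compL := ContinuousLinearMap.compL ℂ (EllOne α) (EllOne α) (EllOne α)
  have both_single (a b : α) : convolution (single a * single b) =
      (convolution (single a)).comp (convolution (single b)) :=
    ext_single fun c => by
      simp only [ContinuousLinearMap.comp_apply, ← mul_def, single_mul_single, add_assoc]
  have left_single (a : α) (q : EllOne α) : convolution (single a * q) =
      (convolution (single a)).comp (convolution q) := by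
    suffices convolution.comp (convolution (single a)) =
        (compL (convolution (single a))).comp convolution from congr($this q)
    exact ext_single (both_single a)
  suffices convolution.comp (convolution.flip q) = (compL.flip (convolution q)).comp convolution
    from congr($this p)
  exact ext_single fun a => left_single a q

noncomputable instance : NormedCommRing (EllOne α) where
  zero_mul p := by rw [mul_def, map_zero, zero_apply]
  mul_zero p := by rw [mul_def, map_zero]
  left_distrib p q r := by simp only [mul_def, map_add]
  right_distrib p q r := by simp only [mul_def, map_add, add_apply]
  mul_assoc p q r := by rw [mul_def, convolution_mul]; rfl
  one_mul p := by rw [mul_def, convolution_one, ContinuousLinearMap.id_apply]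
  mul_one p := by rw [mul_def, ← convolution_flip, ContinuousLinearMap.flip_apply, convolution_one,
    ContinuousLinearMap.id_apply]
  mul_comm p q := by rw [mul_def, ← convolution_flip, ContinuousLinearMap.flip_apply, mul_def]
  dist_eq := NormedAddCommGroup.dist_eq
  norm_mul_le p q := by
    refine (convolution p).le_of_opNorm_le ?_ q
    exact (norm_lift_apply_le _ p).trans_eq (one_mul _)

noncomputable instance : NormedAlgebra ℂ (EllOne α) where
  toAlgebra := Algebra.ofModule (fun c p q => by simp only [mul_def, map_smul, smul_apply])
    fun c p q => by simp only [mul_def, map_smul]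
  norm_smul_le := norm_smul_le

lemma single_pow (a : α) (n : ℕ) : single a ^ n = single (n • a) := by
  induction n with
  | zero => rw [pow_zero, zero_smul, one_def]
  | succ n ih => rw [pow_succ, ih, single_mul_single, succ_nsmul]

/-- The extension of a bounded multiplicative family `b` to a homomorphism of algebras. -/
noncomputable def liftAlgHom {A : Type*} [NormedRing A] [NormedAlgebra ℂ A] [CompleteSpace A]
    {C : ℝ} (b : α → A) (hb : ∀ a, ‖b a‖ ≤ C) (b_zero : b 0 = 1)
    (b_add : ∀ a a', b (a + a') = b a * b a') : EllOne α →ₐ[ℂ] A :=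
  AlgHom.ofLinearMap (lift b hb).toLinearMap (by
      simp only [ContinuousLinearMap.coe_coe, one_def, lift_single, b_zero]) (by
    intro p q
    have fix_single (a : α) : (lift b hb).comp (convolution (single a)) =
        (ContinuousLinearMap.mul ℂ A (b a)).comp (lift b hb) :=
      ext_single fun a' => by
        simp only [ContinuousLinearMap.comp_apply, ← mul_def, single_mul_single, lift_single,
          b_add, ContinuousLinearMap.mul_apply']
    suffices (lift b hb).comp (convolution.flip q) =
        ((ContinuousLinearMap.mul ℂ A).flip (lift b hb q)).comp (lift b hb) from congr($this p)
    exact ext_single fun a => by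
      simp only [ContinuousLinearMap.comp_apply, ContinuousLinearMap.flip_apply,
        ContinuousLinearMap.mul_apply', lift_single]
      exact congr($(fix_single a) q))

end Algebra

end EllOne

/-- Absolutely convergent power series `∑ p (j, k) z ^ j * conj z ^ k` on the closed unit disc. -/
abbrev DiscSeries : Type := EllOne (ℕ × ℕ)

namespace DiscSeries

open EllOne

variable {z : ℂ}

/-- The function `z ^ j * conj z ^ k` for `n = (j, k)`. -/
noncomputable def monomial (n : ℕ × ℕ) (z : ℂ) : ℂ := z ^ n.1 * conj z ^ n.2

lemma norm_monomial_le_one (hz : ‖z‖ ≤ 1) (n : ℕ × ℕ) : ‖monomial n z‖ ≤ 1 := by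
  rw [monomial, norm_mul, norm_pow, norm_pow, norm_conj, ← pow_add]
  exact pow_le_one₀ (norm_nonneg z) hz

lemma monomial_add (m n : ℕ × ℕ) (z : ℂ) : monomial (m + n) z = monomial m z * monomial n z := by
  simp only [monomial, Prod.fst_add, Prod.snd_add]
  ring

lemma monomial_swap (n : ℕ × ℕ) (z : ℂ) : monomial n.swap z = conj (monomial n z) := by
  simp only [monomial, map_mul, map_pow, conj_conj, Prod.fst_swap, Prod.snd_swap, mul_comm]

/-- Evaluation of a series at a point of the closed unit disc. -/
noncomputable def eval (z : ℂ) (hz : ‖z‖ ≤ 1) : DiscSeries →ₐ[ℂ] ℂ :=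
  liftAlgHom (fun n => monomial n z) (norm_monomial_le_one hz)
    (by simp [monomial]) fun m n => monomial_add m n z

lemma eval_eq_tsum (hz : ‖z‖ ≤ 1) (p : DiscSeries) : eval z hz p = ∑' n, p n * monomial n z := rfl

lemma eval_single (hz : ‖z‖ ≤ 1) (n : ℕ × ℕ) : eval z hz (single n) = monomial n z :=
  lift_single (norm_monomial_le_one hz) n

lemma norm_eval_le (hz : ‖z‖ ≤ 1) (p : DiscSeries) : ‖eval z hz p‖ ≤ ‖p‖ :=
  (norm_lift_apply_le (norm_monomial_le_one hz) p).trans_eq (one_mul _)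

/-- Exchange of the exponents of `z` and `conj z`. -/
noncomputable def swapExponents : DiscSeries →L[ℂ] DiscSeries :=
  lift (C := 1) (fun n : ℕ × ℕ => single n.swap) fun n => (norm_single n.swap).le

/-- The series of the complex conjugate function: coefficients are conjugated and the exponents
of `z` and `conj z` are exchanged. -/
noncomputable def conjSeries : DiscSeries →+ DiscSeries :=
  (swapExponents : DiscSeries →+ DiscSeries).comp conjCoeff

lemma norm_conjSeries_le (p : DiscSeries) : ‖conjSeries p‖ ≤ ‖p‖ :=
  (norm_lift_apply_le (C := 1) (fun n : ℕ × ℕ => (norm_single n.swap).le) (conjCoeff p)).trans_eq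
    ((one_mul _).trans (norm_conjCoeff p))

lemma eval_conjSeries (hz : ‖z‖ ≤ 1) (p : DiscSeries) :
    eval z hz (conjSeries p) = conj (eval z hz p) := by
  have eval_comp_swap : (lift (fun n => monomial n z) (norm_monomial_le_one hz)).comp
      swapExponents = lift (fun n => conj (monomial n z))
        fun n => (norm_conj _).trans_le (norm_monomial_le_one hz n) :=
    ext_single fun n => by
      simp only [ContinuousLinearMap.comp_apply, swapExponents, lift_single, monomial_swap]
  calc eval z hz (conjSeries p)
      = ∑' n, conjCoeff p n * conj (monomial n z) := congr($eval_comp_swap (conjCoeff p))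
    _ = conj (eval z hz p) := by
      simp only [eval_eq_tsum, conj_tsum, map_mul, conjCoeff_apply]

/-- The generating function `∑ monomial n z • single n` of the monomials, as a product of two
geometric series. -/
noncomputable def kernel (z : ℂ) : DiscSeries :=
  Ring.inverse (1 - z • single (1, 0)) * Ring.inverse (1 - conj z • single (0, 1))

lemma hasSum_geometric_single (hz : ‖z‖ < 1) (n : ℕ × ℕ) :
    HasSum (fun j : ℕ => z ^ j • single (j • n)) (Ring.inverse (1 - z • single n)) := by
  have hasSum_inverse :=
    (spectrum.hasFPowerSeriesOnBall_inverse_one_sub_smul ℂ (single n)).hasSum (y := z) (by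
      simpa [← NNReal.coe_lt_coe, norm_single, nnnorm, enorm] using hz)
  simpa [single_pow] using hasSum_inverse

lemma analyticAt_kernel : AnalyticAt ℝ kernel 0 := by
  have analyticAt_geometric (n : ℕ × ℕ) :
      AnalyticAt ℝ (fun z : ℂ => Ring.inverse (1 - z • single n)) 0 :=
    (spectrum.hasFPowerSeriesOnBall_inverse_one_sub_smul ℂ (single n)).analyticAt.restrictScalars
  exact (analyticAt_geometric (1, 0)).mul (.comp_of_eq (analyticAt_geometric (0, 1))
    ((conjCLE : ℂ →L[ℝ] ℂ).analyticAt 0) (map_zero conj))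

lemma summable_norm_geometric_single (hz : ‖z‖ < 1) (n : ℕ × ℕ) :
    Summable fun j : ℕ => ‖z ^ j • single (j • n)‖ := by
  simpa only [norm_smul, norm_single, mul_one, norm_pow] using
    summable_geometric_of_lt_one (norm_nonneg z) hz

lemma hasSum_kernel (hz : ‖z‖ < 1) :
    HasSum (fun n : ℕ × ℕ => monomial n z • single n) (kernel z) := by
  have norm_conj_lt : ‖conj z‖ < 1 := by rwa [norm_conj]
  have summable_mul := summable_mul_of_summable_norm (summable_norm_geometric_single hz (1, 0))
    (summable_norm_geometric_single norm_conj_lt (0, 1))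
  have hasSum_mul := (hasSum_geometric_single hz (1, 0)).mul
    (hasSum_geometric_single norm_conj_lt (0, 1)) summable_mul
  have term_eq (n : ℕ × ℕ) : (z ^ n.1 • single (n.1 • ((1, 0) : ℕ × ℕ))) *
      (conj z ^ n.2 • single (n.2 • ((0, 1) : ℕ × ℕ))) = monomial n z • single n := by
    rw [smul_mul_smul_comm, single_mul_single, monomial]
    simp
  simp only [term_eq] at hasSum_mul
  exact hasSum_mul

lemma eval_eq_lift_kernel (hz : ‖z‖ < 1) (p : DiscSeries) :
    eval z hz.le p = lift p p.norm_apply_le (kernel z) := by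
  rw [← ((hasSum_kernel hz).mapL (lift p p.norm_apply_le)).tsum_eq, eval_eq_tsum]
  simp only [map_smul, lift_single, smul_eq_mul, mul_comm]

theorem analyticAt_zero_of_eq_eval {f : ℂ → ℂ} {p : DiscSeries}
    (h : ∀ z (hz : ‖z‖ < 1), f z = eval z hz.le p) : AnalyticAt ℝ f 0 := by
  have analyticAt_lift_kernel : AnalyticAt ℝ (fun z => lift p p.norm_apply_le (kernel z)) 0 :=
    ((lift p p.norm_apply_le).restrictScalars ℝ).analyticAt _ |>.comp analyticAt_kernel
  refine analyticAt_lift_kernel.congr ?_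
  filter_upwards [ball_mem_nhds (0 : ℂ) one_pos] with z hz
  have hz : ‖z‖ < 1 := by simpa using hz
  rw [h z hz, eval_eq_lift_kernel hz]

end DiscSeries

section CauchyIntegral

variable {f g : ℂ → ℂ} {c z : ℂ} {R : ℝ}

lemma circleIntegrable_cauchyKernel_mul (hf : ContinuousOn f (sphere c R)) (hz : z ∈ ball c R) :
    CircleIntegrable (fun ζ => (ζ - z)⁻¹ * f ζ) c R :=
  ContinuousOn.circleIntegrable (pos_of_mem_ball hz).le <|
    .mul (.inv₀ (by fun_prop) fun _ hζ => sub_ne_zero.2 (ne_of_mem_of_not_mem hζ fun hz' =>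
      hz.ne hz')) hf

lemma cauchyIntegral_fun_sub (hf : ContinuousOn f (sphere c R)) (hg : ContinuousOn g (sphere c R))
    (hz : z ∈ ball c R) : cauchyIntegral (fun w => f w - g w) c R z =
      cauchyIntegral f c R z - cauchyIntegral g c R z := by
  simp only [cauchyIntegral, mul_sub]
  rw [circleIntegral.integral_sub (circleIntegrable_cauchyKernel_mul hf hz)
    (circleIntegrable_cauchyKernel_mul hg hz), mul_sub]

lemma cauchyIntegral_fun_const_mul (a : ℂ) (f : ℂ → ℂ) (c : ℂ) (R : ℝ) (z : ℂ) :
    cauchyIntegral (fun w => a * f w) c R z = a * cauchyIntegral f c R z := by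
  simp only [cauchyIntegral, mul_left_comm _ a, circleIntegral.integral_const_mul]

lemma cauchyIntegral_fun_sum {ι : Type*} {s : Finset ι} {F : ι → ℂ → ℂ}
    (hF : ∀ i ∈ s, ContinuousOn (F i) (sphere c R)) (hz : z ∈ ball c R) :
    cauchyIntegral (fun w => ∑ i ∈ s, F i w) c R z = ∑ i ∈ s, cauchyIntegral (F i) c R z := by
  simp only [cauchyIntegral, Finset.mul_sum]
  rw [circleIntegral.integral_fun_sum fun i hi => circleIntegrable_cauchyKernel_mul (hF i hi) hz,
    Finset.mul_sum]

lemma cauchyIntegral_congr (hR : 0 ≤ R) (hfg : EqOn f g (sphere c R)) :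
    cauchyIntegral f c R z = cauchyIntegral g c R z := by
  rw [cauchyIntegral, cauchyIntegral, circleIntegral.integral_congr hR fun ζ hζ => by
    rw [hfg hζ]]

/-- The `n`-th Taylor coefficient at `0` of the Cauchy integral of `f` over the unit circle. -/
noncomputable def cauchyCoeff (f : ℂ → ℂ) (n : ℕ) : ℂ :=
  (2 * π * I : ℂ)⁻¹ * ∮ ζ in C(0, 1), ζ ^ (-(n + 1 : ℤ)) * f ζ

lemma hasSum_cauchyIntegral (hf : ContinuousOn f (sphere 0 1)) (hz : ‖z‖ < 1) :
    HasSum (fun n => cauchyCoeff f n * z ^ n) (cauchyIntegral f 0 1 z) := by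
  have hasSum_cauchyPowerSeries :=
    hasSum_cauchyPowerSeries_integral (hf.circleIntegrable zero_le_one) hz
  have integrand_eq (n : ℕ) (ζ : ℂ) :
      (z / ζ) ^ n * (ζ⁻¹ * f ζ) = z ^ n * (ζ ^ (-(n + 1 : ℤ)) * f ζ) := by
    rw [zpow_neg, ← Nat.cast_succ, zpow_natCast, div_pow, div_eq_mul_inv, pow_succ, mul_inv]
    ring
  simp only [cauchyPowerSeries_apply, smul_eq_mul, sub_zero, zero_add, integrand_eq,
    circleIntegral.integral_const_mul] at hasSum_cauchyPowerSeries
  refine hasSum_cauchyPowerSeries.congr_fun fun n => ?_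
  rw [cauchyCoeff]
  ring

lemma cauchyIntegral_conj_pow {m : ℕ} (hm : m ≠ 0) (hz : ‖z‖ < 1) :
    cauchyIntegral (fun w => conj w ^ m) 0 1 z = 0 := by
  refine (hasSum_cauchyIntegral (by fun_prop) hz).unique ?_
  have cauchyCoeff_eq_zero (n : ℕ) : cauchyCoeff (fun w => conj w ^ m) n = 0 := by
    have eqOn_zpow : EqOn (fun ζ : ℂ => ζ ^ (-(n + 1 : ℤ)) * conj ζ ^ m)
        (fun ζ => (ζ - 0) ^ (-(n + 1 + m : ℤ))) (sphere 0 1) := fun ζ hζ => by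
      have norm_ζ : ‖ζ‖ = 1 := by simpa using hζ
      have conj_eq_inv : conj ζ = ζ⁻¹ := by rw [inv_eq_conj norm_ζ]
      have ζ_ne : ζ ≠ 0 := norm_ne_zero_iff.1 (norm_ζ ▸ one_ne_zero)
      dsimp only
      rw [conj_eq_inv, sub_zero, inv_pow, ← zpow_natCast, ← zpow_neg, ← zpow_add₀ ζ_ne, ← neg_add]
    rw [cauchyCoeff, circleIntegral.integral_congr zero_le_one eqOn_zpow,
      circleIntegral.integral_sub_zpow_of_ne (by omega), mul_zero]
  simp only [cauchyCoeff_eq_zero, zero_mul, hasSum_zero]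

end CauchyIntegral

namespace DiscSeries

open EllOne

variable {z : ℂ}

lemma pow_mul_conj_pow_of_norm_eq_one (hz : ‖z‖ = 1) {j k : ℕ} (h : k ≤ j) :
    z ^ j * conj z ^ k = z ^ (j - k) := by
  have mul_conj_eq_one : z * conj z = 1 := by
    rw [mul_conj, normSq_eq_norm_sq, hz, one_pow, ofReal_one]
  conv_lhs => rw [← Nat.sub_add_cancel h, pow_add, mul_assoc, ← mul_pow, mul_conj_eq_one, one_pow,
    mul_one]

/-- A particular solution `σ` of `∂σ/∂z̄ = z ^ j * conj z ^ k`, namely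
`z ^ j * conj z ^ (k + 1) / (k + 1)` minus the holomorphic monomial with the same boundary values
on the unit circle, if there is one. It is normalized so that its Cauchy integral over the unit
circle vanishes. -/
noncomputable def dbarInverseSingle (n : ℕ × ℕ) : DiscSeries :=
  (n.2 + 1 : ℂ)⁻¹ • (single (n.1, n.2 + 1) -
    if n.2 < n.1 then single (n.1 - (n.2 + 1), 0) else 0)

/-- The function with series `dbarInverseSingle n`. -/
noncomputable def dbarInverseMonomial (n : ℕ × ℕ) (z : ℂ) : ℂ :=
  (n.2 + 1 : ℂ)⁻¹ * (z ^ n.1 * conj z ^ (n.2 + 1) - if n.2 < n.1 then z ^ (n.1 - (n.2 + 1)) else 0)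

lemma eval_dbarInverseSingle (hz : ‖z‖ ≤ 1) (n : ℕ × ℕ) :
    eval z hz (dbarInverseSingle n) = dbarInverseMonomial n z := by
  rw [dbarInverseSingle, dbarInverseMonomial, map_smul, map_sub, smul_eq_mul, eval_single,
    apply_ite (eval z hz), eval_single, map_zero]
  simp only [monomial, pow_zero, mul_one]

lemma norm_dbarInverseSingle_le (n : ℕ × ℕ) : ‖dbarInverseSingle n‖ ≤ 2 := by
  have norm_inv_le : ‖(n.2 + 1 : ℂ)⁻¹‖ ≤ 1 := by
    rw [norm_inv, ← Nat.cast_succ, norm_natCast]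
    exact Nat.cast_inv_le_one n.2.succ
  have norm_ite_le : ‖if n.2 < n.1 then single (n.1 - (n.2 + 1), 0) else (0 : DiscSeries)‖ ≤ 1 := by
    split_ifs
    · exact (norm_single _).le
    · exact norm_zero.trans_le zero_le_one
  rw [dbarInverseSingle, norm_smul]
  exact (mul_le_mul norm_inv_le (norm_sub_le_of_le (norm_single _).le norm_ite_le)
    (norm_nonneg _) zero_le_one).trans_eq (by norm_num)

lemma contDiff_dbarInverseMonomial (n : ℕ × ℕ) : ContDiff ℝ 1 (dbarInverseMonomial n) := by
  have contDiff_conj : ContDiff ℝ 1 (fun w : ℂ => conj w) := conjCLE.contDiff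
  refine contDiff_const.mul (.sub (by fun_prop) ?_)
  split_ifs <;> fun_prop

lemma wirtingerZbar_dbarInverseMonomial (n : ℕ × ℕ) (z : ℂ) :
    wirtingerZbar (dbarInverseMonomial n) z = monomial n z := by
  have k_ne : (n.2 + 1 : ℂ) ≠ 0 := n.2.cast_add_one_ne_zero
  have differentiableAt_conj_pow : DifferentiableAt ℝ (fun w : ℂ => conj w ^ (n.2 + 1)) z :=
    (conjCLE.differentiableAt (x := z)).pow (n.2 + 1)
  have differentiableAt_correction :
      DifferentiableAt ℂ (fun w : ℂ => if n.2 < n.1 then w ^ (n.1 - (n.2 + 1)) else 0) z := by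
    split_ifs <;> fun_prop
  have wirtingerZbar_pow : wirtingerZbar (fun w => w ^ n.1) z = 0 :=
    wirtingerZbar_of_differentiableAt (by fun_prop)
  have differentiableAt_main := DifferentiableAt.fun_mul (𝕜 := ℝ) (a := fun w : ℂ => w ^ n.1)
    (x := z) (by fun_prop) differentiableAt_conj_pow
  unfold dbarInverseMonomial
  rw [wirtingerZbar_fun_const_mul _ (differentiableAt_main.fun_sub
      (differentiableAt_correction.restrictScalars ℝ)),
    wirtingerZbar_fun_sub differentiableAt_main (differentiableAt_correction.restrictScalars ℝ),
    wirtingerZbar_of_differentiableAt differentiableAt_correction,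
    wirtingerZbar_fun_mul (by fun_prop) differentiableAt_conj_pow, wirtingerZbar_pow,
    wirtingerZbar_conj_pow, monomial]
  field_simp
  ring

lemma cauchyIntegral_dbarInverseMonomial (n : ℕ × ℕ) (hz : ‖z‖ < 1) :
    cauchyIntegral (dbarInverseMonomial n) 0 1 z = 0 := by
  obtain ⟨j, k⟩ := n
  unfold dbarInverseMonomial
  split_ifs with h
  · have eqOn_zero : EqOn (fun ζ : ℂ => (k + 1 : ℂ)⁻¹ *
        (ζ ^ j * conj ζ ^ (k + 1) - ζ ^ (j - (k + 1)))) (fun _ => 0) (sphere 0 1) := by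
      intro ζ hζ
      simp only [pow_mul_conj_pow_of_norm_eq_one (mem_sphere_zero_iff_norm.1 hζ) h, sub_self,
        mul_zero]
    rw [cauchyIntegral_congr zero_le_one eqOn_zero]
    simp [cauchyIntegral, circleIntegral]
  · have eqOn_conj_pow : EqOn (fun ζ : ℂ => (k + 1 : ℂ)⁻¹ * (ζ ^ j * conj ζ ^ (k + 1) - 0))
        (fun ζ => (k + 1 : ℂ)⁻¹ * conj ζ ^ (k + 1 - j)) (sphere 0 1) := by
      intro ζ hζ
      have norm_conj_ζ : ‖conj ζ‖ = 1 := by rw [norm_conj, mem_sphere_zero_iff_norm.1 hζ]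
      dsimp only
      rw [← pow_mul_conj_pow_of_norm_eq_one norm_conj_ζ (by lia), conj_conj, sub_zero,
        mul_comm (ζ ^ j)]
    rw [cauchyIntegral_congr zero_le_one eqOn_conj_pow, cauchyIntegral_fun_const_mul,
      cauchyIntegral_conj_pow (by lia) hz, mul_zero]

/-- A right inverse of `∂/∂z̄` on series: the solution whose Cauchy integral over the unit circle
vanishes. -/
noncomputable def dbarInverse : DiscSeries →L[ℂ] DiscSeries :=
  lift dbarInverseSingle norm_dbarInverseSingle_le

lemma eval_dbarInverse_sum (hz : ‖z‖ ≤ 1) (a : ℕ × ℕ → ℂ) (s : Finset (ℕ × ℕ)) :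
    eval z hz (dbarInverse (∑ n ∈ s, a n • single n)) =
      ∑ n ∈ s, a n * dbarInverseMonomial n z := by
  simp only [map_sum, map_smul, dbarInverse, lift_single, eval_dbarInverseSingle, smul_eq_mul]

lemma norm_sub_cauchyIntegral_sub_eval_dbarInverse_sum_le {v : ℂ → ℂ} {C : ℝ} {a : ℕ × ℕ → ℂ}
    {s : Finset (ℕ × ℕ)} (hv : ∀ w ∈ closedBall 0 1, ContDiffAt ℝ 1 v w)
    (hC : ∀ z (hz : ‖z‖ < 1),
      ‖wirtingerZbar v z - eval z hz.le (∑ n ∈ s, a n • single n)‖ ≤ C) (hz : ‖z‖ < 1) :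
    ‖v z - cauchyIntegral v 0 1 z - eval z hz.le (dbarInverse (∑ n ∈ s, a n • single n))‖ ≤
      2 * C := by
  let σ : ℂ → ℂ := fun z => ∑ n ∈ s, a n * dbarInverseMonomial n z
  have term_contDiff (n : ℕ × ℕ) : ContDiff ℝ 1 fun z => a n * dbarInverseMonomial n z :=
    contDiff_const.mul (contDiff_dbarInverseMonomial n)
  have σ_contDiff : ContDiff ℝ 1 σ := .sum fun n _ => term_contDiff n
  have mem_ball_iff {w : ℂ} : w ∈ ball (0 : ℂ) 1 ↔ ‖w‖ < 1 := mem_ball_zero_iff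
  have wirtingerZbar_σ {w : ℂ} (hw : ‖w‖ ≤ 1) :
      wirtingerZbar σ w = eval w hw (∑ n ∈ s, a n • single n) := by
    rw [wirtingerZbar_fun_sum fun n _ => (term_contDiff n).differentiable one_ne_zero w, map_sum]
    refine Finset.sum_congr rfl fun n _ => ?_
    rw [wirtingerZbar_fun_const_mul _ ((contDiff_dbarInverseMonomial n).differentiable
      one_ne_zero w), wirtingerZbar_dbarInverseMonomial, map_smul, eval_single, smul_eq_mul]
  have cauchyIntegral_σ : cauchyIntegral σ 0 1 z = 0 := by
    rw [cauchyIntegral_fun_sum (fun n _ => (term_contDiff n).continuous.continuousOn)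
      (mem_ball_iff.2 hz)]
    simp only [cauchyIntegral_fun_const_mul, cauchyIntegral_dbarInverseMonomial _ hz, mul_zero,
      Finset.sum_const_zero]
  have pompeiu := norm_sub_cauchyIntegral_le (f := fun w => v w - σ w) (C := C)
    (fun w hw => (hv w hw).sub σ_contDiff.contDiffAt) (fun w hw => ?_) (mem_ball_iff.2 hz)
  · rw [cauchyIntegral_fun_sub (fun w hw => (hv w (sphere_subset_closedBall
      hw)).continuousAt.continuousWithinAt) σ_contDiff.continuous.continuousOn (mem_ball_iff.2 hz),
      cauchyIntegral_σ, sub_zero, mul_one, sub_right_comm] at pompeiu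
    rwa [eval_dbarInverse_sum]
  · rw [wirtingerZbar_fun_sub ((hv w (ball_subset_closedBall hw)).differentiableAt one_ne_zero)
      (σ_contDiff.differentiable one_ne_zero w), wirtingerZbar_σ (mem_ball_iff.1 hw).le]
    exact hC w (mem_ball_iff.1 hw)

theorem norm_sub_cauchyIntegral_sub_eval_dbarInverse_le {v : ℂ → ℂ} {C : ℝ} {q : DiscSeries}
    (hv : ∀ w ∈ closedBall 0 1, ContDiffAt ℝ 1 v w)
    (hC : ∀ z (hz : ‖z‖ < 1), ‖wirtingerZbar v z - eval z hz.le q‖ ≤ C) (hz : ‖z‖ < 1) :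
    ‖v z - cauchyIntegral v 0 1 z - eval z hz.le (dbarInverse q)‖ ≤ 2 * C := by
  let partialSum : Finset (ℕ × ℕ) → DiscSeries := fun s => ∑ n ∈ s, q n • single n
  have tendsto_partialSum : Tendsto partialSum atTop (𝓝 q) := hasSum_smul_single q
  have bound (s : Finset (ℕ × ℕ)) :
      ‖v z - cauchyIntegral v 0 1 z - eval z hz.le (dbarInverse (partialSum s))‖ ≤
        2 * (C + ‖q - partialSum s‖) :=
    norm_sub_cauchyIntegral_sub_eval_dbarInverse_sum_le hv (fun w hw => by
      rw [← sub_add_sub_cancel _ (eval w hw.le q), ← map_sub]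
      exact norm_add_le_of_le (hC w hw) (norm_eval_le hw.le _)) hz
  have continuous_eval : Continuous (eval z hz.le) :=
    (lift (fun n => monomial n z) (norm_monomial_le_one hz.le)).continuous
  have tendsto_right : Tendsto (fun s => 2 * (C + ‖q - partialSum s‖)) atTop (𝓝 (2 * C)) := by
    have tendsto_sub := (tendsto_const_nhds (x := q)).sub tendsto_partialSum
    simpa using (tendsto_sub.norm.const_add C).const_mul 2
  have tendsto_left := (tendsto_const_nhds (x := v z - cauchyIntegral v 0 1 z)).sub
    (((continuous_eval.comp dbarInverse.continuous).tendsto q).comp tendsto_partialSum) |>.norm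
  exact le_of_tendsto_of_tendsto' tendsto_left tendsto_right bound

end DiscSeries

section FourierCoefficients

variable {g g' : ℝ → ℂ} {K : ℝ}

lemma sum_norm_sq_fourierCoeffOn_le (hg : Continuous g) (hK : ∀ θ, ‖g θ‖ ≤ K) (s : Finset ℤ) :
    ∑ n ∈ s, ‖fourierCoeffOn Real.two_pi_pos g n‖ ^ 2 ≤ K ^ 2 := by
  have parseval := hasSum_sq_fourierCoeffOn (f := g) Real.two_pi_pos
    (.of_bound hg.aestronglyMeasurable K (.of_forall hK))
  refine (sum_le_hasSum s (fun _ _ => sq_nonneg _) parseval).trans ?_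
  have integral_le : ∫ θ in 0..2 * π, ‖g θ‖ ^ 2 ≤ ∫ _ in 0..2 * π, K ^ 2 :=
    intervalIntegral.integral_mono_on Real.two_pi_pos.le
      ((hg.norm.pow 2).intervalIntegrable _ _) intervalIntegrable_const fun θ _ => by
        gcongr
        exact hK θ
  rw [intervalIntegral.integral_const, sub_zero, smul_eq_mul] at integral_le
  rwa [sub_zero, smul_eq_mul, inv_mul_le_iff₀ Real.two_pi_pos]

lemma natCast_mul_norm_fourierCoeffOn_le (hg : ∀ θ, HasDerivAt g (g' θ) θ) (hg' : Continuous g')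
    (hper : g (2 * π) = g 0) (n : ℕ) : n * ‖fourierCoeffOn Real.two_pi_pos g n‖ ≤
      ‖fourierCoeffOn Real.two_pi_pos g' n‖ := by
  rcases eq_or_ne n 0 with rfl | n_ne
  · simp
  have n_ne' : (n : ℂ) ≠ 0 := mod_cast n_ne
  have coeff_eq := fourierCoeffOn_of_hasDerivAt Real.two_pi_pos (n := n) (mod_cast n_ne)
    (fun θ _ => hg θ) (hg'.intervalIntegrable _ _)
  have mul_coeff_eq : n * fourierCoeffOn Real.two_pi_pos g n =
      I⁻¹ * fourierCoeffOn Real.two_pi_pos g' n := by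
    rw [coeff_eq, hper]
    push_cast
    field_simp [I_ne_zero, Real.pi_ne_zero]
    ring
  rw [← norm_natCast (α := ℂ), ← norm_mul, mul_coeff_eq, norm_mul, norm_inv, norm_I, inv_one,
    one_mul]

/-- An upper bound for the absolute sum of the Fourier coefficients of index `n ≥ 0` of a function
which is bounded by `K` together with its derivative. -/
noncomputable def fourierBound (K : ℝ) : ℝ := (∑' n : ℕ, ((n + 1 : ℝ) ^ 2)⁻¹) + 2 * K ^ 2

lemma fourierBound_nonneg (K : ℝ) : 0 ≤ fourierBound K :=
  add_nonneg (tsum_nonneg fun _ => by positivity) (by positivity)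

lemma sum_norm_fourierCoeffOn_le (hg : ∀ θ, HasDerivAt g (g' θ) θ) (hg' : Continuous g')
    (hper : g (2 * π) = g 0) (hK : ∀ θ, ‖g θ‖ ≤ K) (hK' : ∀ θ, ‖g' θ‖ ≤ K) (s : Finset ℕ) :
    ∑ n ∈ s, ‖fourierCoeffOn Real.two_pi_pos g n‖ ≤ fourierBound K := by
  let c : ℕ → ℝ := fun n => ‖fourierCoeffOn Real.two_pi_pos g n‖
  let c' : ℕ → ℝ := fun n => ‖fourierCoeffOn Real.two_pi_pos g' n‖
  have term_le (n : ℕ) : c n ≤ ((n + 1 : ℝ) ^ 2)⁻¹ + c n ^ 2 + c' n ^ 2 := by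
    have n_pos : (0 : ℝ) < n + 1 := n.cast_add_one_pos
    have c_le : c n ≤ (n + 1 : ℝ)⁻¹ * (c n + c' n) := by
      rw [le_inv_mul_iff₀ n_pos]
      linarith [natCast_mul_norm_fourierCoeffOn_le hg hg' hper n]
    rw [← inv_pow]
    nlinarith [sq_nonneg ((n + 1 : ℝ)⁻¹ - (c n + c' n)), sq_nonneg (c n - c' n),
      sq_nonneg (n + 1 : ℝ)⁻¹]
  have sum_sq_le {G : ℝ → ℂ} (hG : Continuous G) (hGK : ∀ θ, ‖G θ‖ ≤ K) :
      ∑ n ∈ s, ‖fourierCoeffOn Real.two_pi_pos G n‖ ^ 2 ≤ K ^ 2 := by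
    simpa using sum_norm_sq_fourierCoeffOn_le hG hGK (s.map Nat.castEmbedding)
  have g_continuous : Continuous g := continuous_iff_continuousAt.2 fun θ => (hg θ).continuousAt
  have summable_inv_sq : Summable fun n : ℕ => ((n + 1 : ℝ) ^ 2)⁻¹ := by
    exact_mod_cast (summable_nat_add_iff 1).2 (Real.summable_nat_pow_inv.2 one_lt_two)
  calc ∑ n ∈ s, c n ≤ ∑ n ∈ s, (((n + 1 : ℝ) ^ 2)⁻¹ + c n ^ 2 + c' n ^ 2) :=
        Finset.sum_le_sum fun n _ => term_le n
    _ = ∑ n ∈ s, ((n + 1 : ℝ) ^ 2)⁻¹ + ∑ n ∈ s, c n ^ 2 + ∑ n ∈ s, c' n ^ 2 := by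
        rw [Finset.sum_add_distrib, Finset.sum_add_distrib]
    _ ≤ ∑' n : ℕ, ((n + 1 : ℝ) ^ 2)⁻¹ + K ^ 2 + K ^ 2 := by
        gcongr
        · exact summable_inv_sq.sum_le_tsum s fun _ _ => by positivity
        · exact sum_sq_le g_continuous hK
        · exact sum_sq_le hg' hK'
    _ = fourierBound K := by rw [fourierBound]; ring

lemma cauchyCoeff_eq_fourierCoeffOn (f : ℂ → ℂ) (n : ℕ) :
    cauchyCoeff f n = fourierCoeffOn Real.two_pi_pos (fun θ => f (circleMap 0 1 θ)) n := by
  have integrand_eq (θ : ℝ) : deriv (circleMap 0 1) θ *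
      (circleMap 0 1 θ ^ (-(n + 1 : ℤ)) * f (circleMap 0 1 θ)) =
        I * (fourier (-n : ℤ) (θ : AddCircle (2 * π - 0)) * f (circleMap 0 1 θ)) := by
    have fourier_eq : fourier (-n : ℤ) (θ : AddCircle (2 * π - 0)) =
        circleMap 0 1 θ * circleMap 0 1 θ ^ (-(n + 1 : ℤ)) := by
      have circleMap_ne : circleMap 0 1 θ ≠ 0 := circleMap_ne_center one_ne_zero
      have exponent_eq : 2 * π * I * (-n : ℤ) * θ / (2 * π - 0 : ℝ) = (-n : ℤ) * (θ * I) := by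
        push_cast
        field_simp
        ring
      rw [← zpow_one_add₀ circleMap_ne, show 1 + -(n + 1 : ℤ) = -n by ring, fourier_coe_apply,
        exponent_eq, exp_int_mul, circleMap_zero, ofReal_one, one_mul]
    rw [deriv_circleMap, fourier_eq]
    ring
  have scalar_eq : (2 * π * I : ℂ)⁻¹ * I = (1 / (2 * π - 0) : ℝ) := by
    push_cast
    field_simp [I_ne_zero]
    ring
  rw [cauchyCoeff, circleIntegral, fourierCoeffOn_eq_integral]
  simp only [smul_eq_mul, integrand_eq, intervalIntegral.integral_const_mul]
  rw [real_smul, ← scalar_eq, ← mul_assoc]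

end FourierCoefficients

namespace DiscSeries

open EllOne

theorem exists_eval_eq_cauchyIntegral {v : ℂ → ℂ} {K : ℝ}
    (hv : ∀ w ∈ sphere 0 1, ContDiffAt ℝ 1 v w) (hK : ∀ w ∈ sphere (0 : ℂ) 1, ‖v w‖ ≤ K)
    (hK' : ∀ w ∈ sphere (0 : ℂ) 1, ‖fderiv ℝ v w‖ ≤ K) :
    ∃ h : DiscSeries, ‖h‖ ≤ fourierBound K ∧
      ∀ z (hz : ‖z‖ < 1), eval z hz.le h = cauchyIntegral v 0 1 z := by
  have mem_sphere (θ : ℝ) : circleMap 0 1 θ ∈ sphere (0 : ℂ) 1 :=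
    circleMap_mem_sphere 0 zero_le_one θ
  have hasDerivAt_comp (θ : ℝ) : HasDerivAt (fun θ => v (circleMap 0 1 θ))
      (fderiv ℝ v (circleMap 0 1 θ) (deriv (circleMap 0 1) θ)) θ :=
    ((hv _ (mem_sphere θ)).differentiableAt one_ne_zero).hasFDerivAt.comp_hasDerivAt θ
      (differentiable_circleMap 0 1 θ).hasDerivAt
  have continuous_deriv :
      Continuous fun θ => fderiv ℝ v (circleMap 0 1 θ) (deriv (circleMap 0 1) θ) :=
    .clm_apply (continuous_iff_continuousAt.2 fun θ =>
      ((hv _ (mem_sphere θ)).continuousAt_fderiv one_ne_zero).comp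
        (continuous_circleMap 0 1).continuousAt) (continuous_deriv_circleMap 0 1)
  have sum_norm_le (s : Finset ℕ) : ∑ n ∈ s, ‖cauchyCoeff v n • single (n, 0)‖ ≤
      fourierBound K := by
    simp only [norm_smul, norm_single, mul_one, cauchyCoeff_eq_fourierCoeffOn]
    refine sum_norm_fourierCoeffOn_le hasDerivAt_comp continuous_deriv ?_
      (fun θ => hK _ (mem_sphere θ)) (fun θ => ?_) s
    · rw [(periodic_circleMap 0 1).eq]
    · refine (ContinuousLinearMap.le_of_opNorm_le _ (hK' _ (mem_sphere θ)) _).trans_eq ?_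
      simp
  have summable_norm : Summable fun n => ‖cauchyCoeff v n • single (n, 0)‖ :=
    summable_of_sum_le (fun _ => norm_nonneg _) sum_norm_le
  refine ⟨∑' n, cauchyCoeff v n • single (n, 0),
    tsum_of_norm_bounded summable_norm.hasSum (fun _ => le_rfl) |>.trans
      (summable_norm.tsum_le_of_sum_le sum_norm_le), fun z hz => ?_⟩
  have hasSum_eval := summable_norm.of_norm.hasSum.mapL
    (lift (fun n => monomial n z) (norm_monomial_le_one hz.le))
  simp only [map_smul, lift_single, monomial, pow_zero, mul_one, smul_eq_mul] at hasSum_eval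
  exact hasSum_eval.unique (hasSum_cauchyIntegral
    (fun w hw => (hv w hw).continuousAt.continuousWithinAt) hz)

end DiscSeries

section Lipschitz

variable {X : Type*} [PseudoMetricSpace X] {s : Set X}

lemma isBounded_image_of_lipschitzOnWith {Y : Type*} [PseudoMetricSpace Y] {f : X → Y} {L : ℝ≥0}
    (hf : LipschitzOnWith L f s) (hs : Bornology.IsBounded s) : Bornology.IsBounded (f '' s) := by
  obtain ⟨C, hC⟩ := isBounded_iff.1 hs
  refine isBounded_image_iff.2 ⟨L * C, fun x hx y hy => (hf.dist_le_mul x hx y hy).trans ?_⟩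
  gcongr
  exact hC hx hy

lemma exists_lipschitzOnWith_mul {A : Type*} [NonUnitalSeminormedRing A] {f g : X → A} {Kf Kg : ℝ≥0}
    (hf : LipschitzOnWith Kf f s) (hg : LipschitzOnWith Kg g s) (hs : Bornology.IsBounded s) :
    ∃ L, LipschitzOnWith L (fun x => f x * g x) s := by
  obtain ⟨Cf, hCf⟩ := (isBounded_image_of_lipschitzOnWith hf hs).exists_norm_le
  obtain ⟨Cg, hCg⟩ := (isBounded_image_of_lipschitzOnWith hg hs).exists_norm_le
  refine ⟨_, LipschitzOnWith.of_dist_le' (K := Cf * Kg + Cg * Kf) fun x hx y hy => ?_⟩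
  calc dist (f x * g x) (f y * g y)
      = ‖f x * (g x - g y) + (f x - f y) * g y‖ := by rw [dist_eq_norm]; noncomm_ring
    _ ≤ ‖f x‖ * dist (g x) (g y) + dist (f x) (f y) * ‖g y‖ := by
        rw [dist_eq_norm, dist_eq_norm]
        exact (norm_add_le _ _).trans (add_le_add (norm_mul_le _ _) (norm_mul_le _ _))
    _ ≤ Cf * (Kg * dist x y) + Kf * dist x y * Cg := by
        have norm_f_le := hCf _ (mem_image_of_mem f hx)
        have norm_g_le := hCg _ (mem_image_of_mem g hy)
        gcongr
        · exact (norm_nonneg _).trans norm_f_le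
        · exact hg.dist_le_mul x hx y hy
        · exact hf.dist_le_mul x hx y hy
    _ = (Cf * Kg + Cg * Kf) * dist x y := by ring

lemma exists_lipschitzOnWith_pi {ι Y : Type*} [Fintype ι] [PseudoMetricSpace Y] {f : X → ι → Y}
    (hf : ∀ i, ∃ L, LipschitzOnWith L (fun x => f x i) s) : ∃ L, LipschitzOnWith L f s := by
  choose L hL using hf
  refine ⟨Finset.univ.sup L, fun x hx y hy => edist_pi_le_iff.2 fun i => ?_⟩
  exact (hL i).weaken (Finset.le_sup (Finset.mem_univ i)) hx hy

end Lipschitz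

lemma eventually_exists_eq_add_smul {𝕜 E : Type*} [NormedField 𝕜] [NormedAddCommGroup E]
    [NormedSpace 𝕜 E] [CompleteSpace E] {F : E → E} {L : ℝ≥0} {M : ℝ}
    (hF : LipschitzOnWith L F (closedBall 0 (M + 1))) :
    ∀ᶠ ε : 𝕜 in 𝓝 0, ∀ h, ‖h‖ ≤ M → ∃ x, ‖x‖ ≤ M + 1 ∧ x = h + ε • F x := by
  obtain ⟨C, hC⟩ := (isBounded_image_of_lipschitzOnWith hF isBounded_closedBall).exists_norm_le
  have tendsto_zero (a : ℝ) : Tendsto (fun ε : 𝕜 => ‖ε‖ * a) (𝓝 0) (𝓝 0) := by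
    simpa using (tendsto_norm_zero (E := 𝕜)).mul_const a
  filter_upwards [(tendsto_zero L).eventually_le_const one_half_pos,
    (tendsto_zero C).eventually_le_const one_pos] with ε hεL hεC h hh
  have mapsTo : MapsTo (fun x => h + ε • F x) (closedBall 0 (M + 1)) (closedBall 0 (M + 1)) := by
    intro x hx
    have norm_F_le := hC _ (mem_image_of_mem F hx)
    rw [mem_closedBall_zero_iff]
    calc ‖h + ε • F x‖ ≤ ‖h‖ + ‖ε‖ * ‖F x‖ := (norm_add_le _ _).trans_eq (by rw [norm_smul])
      _ ≤ M + ‖ε‖ * C := by gcongr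
      _ ≤ M + 1 := by gcongr
  have lipschitz : LipschitzWith (1 / 2) (mapsTo.restrict _ _ _) :=
    LipschitzWith.of_dist_le_mul fun x y => by
      rw [Subtype.dist_eq, MapsTo.val_restrict_apply, MapsTo.val_restrict_apply, dist_add_left,
        dist_smul₀]
      calc ‖ε‖ * dist (F x) (F y) ≤ ‖ε‖ * (L * dist x y) := by
            gcongr
            exact hF.dist_le_mul x x.2 y y.2
        _ = ‖ε‖ * L * dist x y := by ring
        _ ≤ 1 / 2 * dist x y := by gcongr
  have h_mem : h ∈ closedBall 0 (M + 1) := mem_closedBall_zero_iff.2 (by linarith)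
  obtain ⟨x, hx, fixed, -⟩ := ContractingWith.exists_fixedPoint' isClosed_closedBall.isComplete
    mapsTo ⟨NNReal.half_lt_self one_ne_zero, lipschitz⟩ h_mem (edist_ne_top _ _)
  exact ⟨x, mem_closedBall_zero_iff.1 hx, fixed.symm⟩

section PolynomialMap

variable {ι A : Type*} [NormedCommRing A] [NormedAlgebra ℂ A]

lemma exists_lipschitzOnWith_aeval {κ : Type*} [Fintype κ] (P : MvPolynomial κ ℂ)
    {s : Set (κ → A)} (hs : Bornology.IsBounded s) :
    ∃ L, LipschitzOnWith L (fun x => MvPolynomial.aeval x P) s := by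
  induction P using MvPolynomial.induction_on with
  | C a =>
    simp only [MvPolynomial.aeval_C]
    exact ⟨0, (LipschitzWith.const _).lipschitzOnWith⟩
  | add P P' ihP ihP' =>
    obtain ⟨L, hL⟩ := ihP
    obtain ⟨L', hL'⟩ := ihP'
    simp only [map_add]
    exact ⟨L + L', hL.add hL'⟩
  | mul_X P k ihP =>
    obtain ⟨L, hL⟩ := ihP
    simp only [map_mul, MvPolynomial.aeval_X]
    exact exists_lipschitzOnWith_mul hL ((LipschitzWith.eval k).lipschitzOnWith) hs

/-- The map `x ↦ Q (x, τ x)` of `A ^ ι` to itself given by polynomials `Q i` in the coordinates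
of `x` and their images under `τ`, which stands for complex conjugation: the variables
`Sum.inl j` and `Sum.inr j` are replaced by `x j` and `τ (x j)`. -/
noncomputable def polyMap (τ : A → A) (Q : ι → MvPolynomial (ι ⊕ ι) ℂ) (x : ι → A) : ι → A :=
  fun i => MvPolynomial.aeval (Sum.elim x (τ ∘ x)) (Q i)

variable [Fintype ι]

lemma exists_lipschitzOnWith_polyMap {τ : A → A} (hτ : LipschitzWith 1 τ)
    (Q : ι → MvPolynomial (ι ⊕ ι) ℂ) {s : Set (ι → A)} (hs : Bornology.IsBounded s) :
    ∃ L, LipschitzOnWith L (polyMap τ Q) s := by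
  have lipschitz_elim : LipschitzWith 1 fun x : ι → A => Sum.elim x (τ ∘ x) := by
    intro x y
    rw [ENNReal.coe_one, one_mul, edist_pi_le_iff]
    rintro (j | j)
    · exact edist_le_pi_edist x y j
    · exact (hτ (x j) (y j)).trans (by simpa using edist_le_pi_edist x y j)
  refine exists_lipschitzOnWith_pi fun i => ?_
  obtain ⟨L, hL⟩ := exists_lipschitzOnWith_aeval (Q i) (lipschitz_elim.isBounded_image hs)
  exact ⟨L * 1, hL.comp lipschitz_elim.lipschitzOnWith (mapsTo_image _ s)⟩

end PolynomialMap

section UnitDisc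

open DiscSeries

variable {ι : Type*} {Q : ι → MvPolynomial (ι ⊕ ι) ℂ}

lemma eval_polyMap {z : ℂ} (hz : ‖z‖ ≤ 1) (p : ι → DiscSeries) (i : ι) :
    eval z hz (polyMap conjSeries Q p i) = polyMap conj Q (fun j => eval z hz (p j)) i := by
  have eval_elim : (fun j => eval z hz (Sum.elim p (conjSeries ∘ p) j)) =
      Sum.elim (fun j => eval z hz (p j)) (conj ∘ fun j => eval z hz (p j)) := by
    ext (j | j)
    · rfl
    · exact eval_conjSeries hz (p j)
  rw [polyMap, MvPolynomial.comp_aeval_apply, eval_elim, polyMap]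

section FixedPoint

variable [Fintype ι]

lemma eventually_exists_eq_add_dbarInverse (Q : ι → MvPolynomial (ι ⊕ ι) ℂ) (B : ℝ) :
    ∀ᶠ ε : ℂ in 𝓝 0, ∀ h : ι → DiscSeries, ‖h‖ ≤ B → ∃ p : ι → DiscSeries, ‖p‖ ≤ B + 1 ∧
      ∀ i, p i = h i + dbarInverse (ε • polyMap conjSeries Q p i) := by
  have lipschitz_conjSeries : LipschitzWith 1 conjSeries :=
    LipschitzWith.of_dist_le_mul fun p q => by
      simpa [dist_eq_norm] using norm_conjSeries_le (p - q)
  obtain ⟨L, hL⟩ := exists_lipschitzOnWith_polyMap lipschitz_conjSeries Q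
    (isBounded_closedBall (x := 0) (r := B + 1))
  have lipschitz_dbarInverse :=
    (ContinuousLinearMap.piMap fun _ : ι => dbarInverse).lipschitz.comp_lipschitzOnWith hL
  filter_upwards [eventually_exists_eq_add_smul lipschitz_dbarInverse] with ε hε h hh
  obtain ⟨p, norm_p_le, fixed⟩ := hε h hh
  refine ⟨p, norm_p_le, fun i => ?_⟩
  rw [map_smul]
  exact congrFun fixed i

lemma norm_mul_polyMap_sub_eval_le {p : ι → DiscSeries} {ε : ℂ} {L : ℝ≥0} {M : ℝ} {x : ι → ℂ}
    (hL : LipschitzOnWith L (polyMap conj Q) (closedBall (0 : ι → ℂ) M)) (x_le : ‖x‖ ≤ M)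
    (p_le : ‖p‖ ≤ M) {z : ℂ} (hz : ‖z‖ ≤ 1) (i : ι) :
    ‖ε * polyMap conj Q x i - eval z hz (ε • polyMap conjSeries Q p i)‖ ≤
      ‖ε‖ * L * ‖x - fun j => eval z hz (p j)‖ := by
  have M_nonneg : 0 ≤ M := (norm_nonneg p).trans p_le
  have eval_mem : (fun j => eval z hz (p j)) ∈ closedBall 0 M :=
    mem_closedBall_zero_iff.2 ((pi_norm_le_iff_of_nonneg M_nonneg).2 fun j =>
      (norm_eval_le hz (p j)).trans ((norm_le_pi_norm p j).trans p_le))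
  rw [map_smul, smul_eq_mul, eval_polyMap, ← mul_sub, norm_mul, mul_assoc]
  gcongr
  exact (norm_le_pi_norm _ i).trans (hL.norm_sub_le (mem_closedBall_zero_iff.2 x_le) eval_mem)

lemma eq_eval_of_eq_add_dbarInverse {v : ι → ℂ → ℂ} {p h : ι → DiscSeries} {ε : ℂ} {L : ℝ≥0}
    {M : ℝ} (hL : LipschitzOnWith L (polyMap conj Q) (closedBall (0 : ι → ℂ) M))
    (hε : ‖ε‖ * L ≤ 1 / 4) (hv : ∀ i, ∀ w ∈ closedBall 0 1, ContDiffAt ℝ 1 (v i) w)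
    (v_le : ∀ i, ∀ w ∈ closedBall 0 1, ‖v i w‖ ≤ M) (p_le : ‖p‖ ≤ M)
    (v_eq : ∀ i, ∀ z ∈ ball 0 1, wirtingerZbar (v i) z = ε * polyMap conj Q (fun j => v j z) i)
    (h_eq : ∀ i z (hz : ‖z‖ < 1), eval z hz.le (h i) = cauchyIntegral (v i) 0 1 z)
    (p_eq : ∀ i, p i = h i + dbarInverse (ε • polyMap conjSeries Q p i))
    (i : ι) (z : ℂ) (hz : ‖z‖ < 1) : v i z = eval z hz.le (p i) := by
  have M_nonneg : 0 ≤ M := (norm_nonneg p).trans p_le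
  have halve {D : ℝ} (hD : ∀ i z (hz : ‖z‖ < 1), ‖v i z - eval z hz.le (p i)‖ ≤ D)
      (i : ι) (z : ℂ) (hz : ‖z‖ < 1) : ‖v i z - eval z hz.le (p i)‖ ≤ D / 2 := by
    have D_nonneg : 0 ≤ D := (norm_nonneg _).trans (hD i z hz)
    have dbar_sub_le (w : ℂ) (hw : ‖w‖ < 1) :
        ‖wirtingerZbar (v i) w - eval w hw.le (ε • polyMap conjSeries Q p i)‖ ≤ 1 / 4 * D := by
      rw [v_eq i w (mem_ball_zero_iff.2 hw)]
      refine (norm_mul_polyMap_sub_eval_le hL ((pi_norm_le_iff_of_nonneg M_nonneg).2 fun j =>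
        v_le j w (mem_closedBall_zero_iff.2 hw.le)) p_le hw.le i).trans ?_
      gcongr
      exact (pi_norm_le_iff_of_nonneg D_nonneg).2 fun j => hD j w hw
    have bound := norm_sub_cauchyIntegral_sub_eval_dbarInverse_le (hv i) dbar_sub_le hz
    rw [p_eq i, map_add, h_eq i z hz, ← sub_sub]
    linarith
  have norm_sub_le_pow (n : ℕ) : ∀ i z (hz : ‖z‖ < 1),
      ‖v i z - eval z hz.le (p i)‖ ≤ (1 / 2) ^ n * (M + M) := by
    induction n with
    | zero =>
      intro i z hz
      rw [pow_zero, one_mul]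
      exact norm_sub_le_of_le (v_le i z (mem_closedBall_zero_iff.2 hz.le))
        ((norm_eval_le hz.le (p i)).trans ((norm_le_pi_norm p i).trans p_le))
    | succ n ih => exact fun i z hz => (halve ih i z hz).trans_eq (by ring)
  have tendsto_zero : Tendsto (fun n : ℕ => (1 / 2 : ℝ) ^ n * (M + M)) atTop (𝓝 0) := by
    simpa using (tendsto_pow_atTop_nhds_zero_of_lt_one one_half_pos.le one_half_lt_one).mul_const
      (M + M)
  exact sub_eq_zero.1 (norm_le_zero_iff.1
    (ge_of_tendsto' tendsto_zero fun n => norm_sub_le_pow n i z hz))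

end FixedPoint

theorem eventually_exists_eq_eval [Finite ι] (Q : ι → MvPolynomial (ι ⊕ ι) ℂ) (K : ℝ) :
    ∀ᶠ ε : ℂ in 𝓝 0, ∀ v : ι → ℂ → ℂ,
      (∀ i, ∀ w ∈ closedBall 0 1, ContDiffAt ℝ 1 (v i) w) →
      (∀ i, ∀ w ∈ closedBall 0 1, ‖v i w‖ ≤ K ∧ ‖fderiv ℝ (v i) w‖ ≤ K) →
      (∀ i, ∀ z ∈ ball 0 1, wirtingerZbar (v i) z = ε * polyMap conj Q (fun j => v j z) i) →
      ∃ p : ι → DiscSeries, ∀ i z (hz : ‖z‖ < 1), v i z = eval z hz.le (p i) := by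
  cases nonempty_fintype ι
  have lipschitz_conj : LipschitzWith 1 (conj : ℂ → ℂ) := conjLIE.isometry.lipschitz
  obtain ⟨L, hL⟩ := exists_lipschitzOnWith_polyMap lipschitz_conj Q
    (isBounded_closedBall (x := 0) (r := max K (fourierBound K + 1)))
  have tendsto_zero : Tendsto (fun ε : ℂ => ‖ε‖ * L) (𝓝 0) (𝓝 0) := by
    simpa using (tendsto_norm_zero (E := ℂ)).mul_const (L : ℝ)
  filter_upwards [eventually_exists_eq_add_dbarInverse Q (fourierBound K),
    tendsto_zero.eventually_le_const (show (0 : ℝ) < 1 / 4 by norm_num)]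
    with ε exists_p hε v hv v_le v_eq
  have boundary (i : ι) := exists_eval_eq_cauchyIntegral
    (fun w hw => hv i w (sphere_subset_closedBall hw))
    (fun w hw => (v_le i w (sphere_subset_closedBall hw)).1)
    (fun w hw => (v_le i w (sphere_subset_closedBall hw)).2)
  choose h h_le h_eq using boundary
  obtain ⟨p, p_le, p_eq⟩ := exists_p h ((pi_norm_le_iff_of_nonneg (fourierBound_nonneg K)).2 h_le)
  exact ⟨p, eq_eval_of_eq_add_dbarInverse hL hε hv
    (fun i w hw => (v_le i w hw).1.trans (le_max_left _ _)) (p_le.trans (le_max_right _ _))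
    v_eq h_eq p_eq⟩

end UnitDisc

section Regularity

open DiscSeries

variable {ι : Type*} [Finite ι] {U : Set ℂ}

lemma exists_norm_fderiv_le_of_contDiffOn {u : ι → ℂ → ℂ} {s : Set ℂ} (hU : IsOpen U)
    (hu : ∀ i, ContDiffOn ℝ 1 (u i) U) (hs : IsCompact s) (hsU : s ⊆ U) :
    ∃ K, ∀ i, ∀ w ∈ s, ‖u i w‖ ≤ K ∧ ‖fderiv ℝ (u i) w‖ ≤ K := by
  cases nonempty_fintype ι
  have bound (i : ι) := hs.exists_bound_of_continuousOn
    (((hu i).continuousOn.prodMk ((hu i).continuousOn_fderiv_of_isOpen hU le_rfl)).mono hsU)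
  choose K hK using bound
  refine ⟨∑ i, |K i|, fun i w hw => ?_⟩
  have norm_le : ‖(u i w, fderiv ℝ (u i) w)‖ ≤ ∑ i, |K i| :=
    (hK i w hw).trans ((le_abs_self _).trans
      (Finset.single_le_sum (f := fun i => |K i|) (fun _ _ => abs_nonneg _) (Finset.mem_univ i)))
  exact ⟨(norm_fst_le _).trans norm_le, (norm_snd_le _).trans norm_le⟩

theorem analyticOnNhd_of_wirtingerZbar_eq_polyMap {u : ι → ℂ → ℂ} (hU : IsOpen U)
    (hu : ∀ i, ContDiffOn ℝ 1 (u i) U) (Q : ι → MvPolynomial (ι ⊕ ι) ℂ)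
    (u_eq : ∀ i, ∀ z ∈ U, wirtingerZbar (u i) z = polyMap conj Q (fun j => u j z) i) (i : ι) :
    AnalyticOnNhd ℝ (u i) U := by
  intro c hc
  obtain ⟨r, r_pos, hr⟩ := nhds_basis_closedBall.mem_iff.1 (hU.mem_nhds hc)
  obtain ⟨K, hK⟩ := exists_norm_fderiv_le_of_contDiffOn hU hu (isCompact_closedBall c r) hr
  have tendsto_ofReal : Tendsto (fun R : ℝ => (R : ℂ)) (𝓝[>] 0) (𝓝 0) :=
    (continuous_ofReal.tendsto' 0 0 ofReal_zero).mono_left nhdsWithin_le_nhds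
  obtain ⟨R, exists_p, R_pos, R_le⟩ := ((tendsto_ofReal.eventually
    (eventually_exists_eq_eval Q K)).and (Ioc_mem_nhdsGT (lt_min r_pos one_pos))).exists
  have affine_mem {w : ℂ} (hw : w ∈ closedBall 0 1) : c + R • w ∈ closedBall c r := by
    rw [mem_closedBall, dist_self_add_left, norm_smul, Real.norm_of_nonneg R_pos.le]
    nlinarith [mem_closedBall_zero_iff.1 hw, min_le_left r 1]
  obtain ⟨p, hp⟩ := exists_p (fun j w => u j (c + R • w))
    (fun j w hw => ((hu j).contDiffAt (hU.mem_nhds (hr (affine_mem hw)))).comp w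
      (contDiffAt_const.add (contDiffAt_id.const_smul R)))
    (fun j w hw => by
      obtain ⟨u_le, fderiv_le⟩ := hK j _ (affine_mem hw)
      refine ⟨u_le, ?_⟩
      rw [fderiv_comp_affine, norm_smul, Real.norm_of_nonneg R_pos.le]
      exact (mul_le_of_le_one_left (norm_nonneg _) (R_le.trans (min_le_right _ _))).trans fderiv_le)
    (fun j z hz => by
      rw [wirtingerZbar_comp_affine, u_eq j _ (hr (affine_mem (ball_subset_closedBall hz)))])
  have analyticAt_rescaled : AnalyticAt ℝ (fun w => u i (c + R • w)) (R⁻¹ • (c - c)) := by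
    rw [sub_self, smul_zero]
    exact analyticAt_zero_of_eq_eval (hp i)
  have rescale_back : u i = (fun w => u i (c + R • w)) ∘ fun w => R⁻¹ • (w - c) := by
    ext w
    simp only [Function.comp_apply, smul_inv_smul₀ R_pos.ne', add_sub_cancel]
  rw [rescale_back]
  exact AnalyticAt.comp analyticAt_rescaled (by fun_prop)

end Regularity

section Loboda

variable {U : Set ℂ} {μ : ℂ → ℂ}

/-- The unknowns `(conj μ, μ_z, μ_{zz̄} - μ μ_z)` in which Loboda's equation becomes a first order
system `∂̄ u = Q (u, conj u)`. -/
noncomputable def lobodaUnknowns (μ : ℂ → ℂ) : Fin 3 → ℂ → ℂ :=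
  ![fun z => conj (μ z), wirtingerZ μ,
    fun z => wirtingerZbar (wirtingerZ μ) z - μ z * wirtingerZ μ z]

open MvPolynomial in
/-- The right hand sides `(conj u₁, u₂ + conj u₀ * u₁, 2 * conj u₀ * u₂)` of the first order system
equivalent to Loboda's equation. -/
noncomputable def lobodaPolynomials : Fin 3 → MvPolynomial (Fin 3 ⊕ Fin 3) ℂ :=
  ![X (.inr 1), X (.inl 2) + X (.inr 0) * X (.inl 1), 2 * X (.inr 0) * X (.inl 2)]

lemma polyMap_lobodaPolynomials (x : Fin 3 → ℂ) : polyMap conj lobodaPolynomials x =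
    ![conj (x 1), x 2 + conj (x 0) * x 1, 2 * conj (x 0) * x 2] := by
  ext i
  fin_cases i <;> simp [polyMap, lobodaPolynomials]

lemma contDiffOn_lobodaUnknowns (hU : IsOpen U) (hμ : ContDiffOn ℝ 3 μ U) (i : Fin 3) :
    ContDiffOn ℝ 1 (lobodaUnknowns μ i) U := by
  have contDiffOn_μ : ContDiffOn ℝ 1 μ U := hμ.of_le (by norm_num)
  have contDiffOn_μz : ContDiffOn ℝ (1 + 1) (wirtingerZ μ) U :=
    contDiffOn_wirtingerZ hU (hμ.of_le (by norm_num))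
  fin_cases i
  · exact conjCLE.contDiff.comp_contDiffOn contDiffOn_μ
  · exact contDiffOn_μz.of_le le_self_add
  · exact (contDiffOn_wirtingerZbar hU contDiffOn_μz).sub
      (contDiffOn_μ.mul (contDiffOn_μz.of_le le_self_add))

lemma wirtingerZbar_lobodaUnknowns (hU : IsOpen U) (hμ : ContDiffOn ℝ 3 μ U)
    (heq : ∀ z ∈ U,
      wirtingerZbar (wirtingerZbar (wirtingerZ μ)) z
        - 3 * wirtingerZbar (wirtingerZ μ) z * μ z
        + 2 * wirtingerZ μ z * (μ z) ^ 2
        - wirtingerZ μ z * wirtingerZbar μ z = 0) (i : Fin 3) {z : ℂ} (hz : z ∈ U) :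
    wirtingerZbar (lobodaUnknowns μ i) z =
      polyMap conj lobodaPolynomials (fun j => lobodaUnknowns μ j z) i := by
  have differentiableAt {f : ℂ → ℂ} (hf : ContDiffOn ℝ 1 f U) : DifferentiableAt ℝ f z :=
    (hf.contDiffAt (hU.mem_nhds hz)).differentiableAt one_ne_zero
  have contDiffOn_μz : ContDiffOn ℝ (1 + 1) (wirtingerZ μ) U :=
    contDiffOn_wirtingerZ hU (hμ.of_le (by norm_num))
  have differentiableAt_μ := differentiableAt (hμ.of_le (by norm_num))
  have differentiableAt_μz := differentiableAt (contDiffOn_μz.of_le le_self_add)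
  have differentiableAt_μzz := differentiableAt (contDiffOn_wirtingerZbar hU contDiffOn_μz)
  rw [polyMap_lobodaPolynomials]
  fin_cases i
  · exact wirtingerZbar_conj_comp μ z
  · simp [lobodaUnknowns]
  · simp only [lobodaUnknowns, Fin.reduceFinMk, Matrix.cons_val, conj_conj]
    rw [wirtingerZbar_fun_sub differentiableAt_μzz (differentiableAt_μ.fun_mul differentiableAt_μz),
      wirtingerZbar_fun_mul differentiableAt_μ differentiableAt_μz]
    linear_combination heq z hz

theorem loboda_solution_is_real_analytic_general (hU : IsOpen U) (hμ : ContDiffOn ℝ 3 μ U)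
    (heq : ∀ z ∈ U,
      wirtingerZbar (wirtingerZbar (wirtingerZ μ)) z
        - 3 * wirtingerZbar (wirtingerZ μ) z * μ z
        + 2 * wirtingerZ μ z * (μ z) ^ 2
        - wirtingerZ μ z * wirtingerZbar μ z = 0) :
    AnalyticOnNhd ℝ μ U := by
  have analyticOnNhd_conj : AnalyticOnNhd ℝ (fun z => conj (μ z)) U :=
    analyticOnNhd_of_wirtingerZbar_eq_polyMap hU (contDiffOn_lobodaUnknowns hU hμ)
      lobodaPolynomials (fun i _ hz => wirtingerZbar_lobodaUnknowns hU hμ heq i hz) 0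
  have conj_conj_μ : μ = fun z => conj (conj (μ z)) := funext fun z => (conj_conj (μ z)).symm
  rw [conj_conj_μ]
  exact (conjCLE : ℂ →L[ℝ] ℂ).comp_analyticOnNhd analyticOnNhd_conj

end Loboda

/-- Every `C^∞`-smooth solution `μ` of Loboda's equation
`μ_{zz̄z̄} - 3 μ_{zz̄} μ + 2 μ_z μ² - μ_z μ_z̄ = 0` on an open set `U ⊆ ℂ` is
real-analytic on `U`.  (Equation (2.3) of the paper; Remark 1.2.) -/
theorem loboda_solution_is_real_analytic
    (U : Set ℂ) (hU : IsOpen U)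
    (μ : ℂ → ℂ) (hμ : ContDiffOn ℝ (⊤ : ℕ∞) μ U)
    (heq : ∀ z ∈ U,
      wirtingerZbar (wirtingerZbar (wirtingerZ μ)) z
        - 3 * wirtingerZbar (wirtingerZ μ) z * μ z
        + 2 * wirtingerZ μ z * (μ z) ^ 2
        - wirtingerZ μ z * wirtingerZbar μ z = 0) :
    AnalyticOnNhd ℝ μ U :=
  loboda_solution_is_real_analytic_general hU (contDiffOn_infty.1 hμ 3) heq
end
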